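/- Hamilton–Jacobi theorem, parabolic case: the renormalized value function v is a viscosity solution on Ω of the Hamilton–Jacobi equation ½‖∇v‖_M² − U = 0; that is, for every x ∈ Ω, one has ½‖p‖_M² − U(x) ≤ 0 for all p ∈ D⁺v(x) and ½‖p‖_M² − U(x) ≥ 0 for all p ∈ D⁻v(x). -/

import Mathlib

open MeasureTheory Real Set Filter Topology
open scoped RealInnerProductSpace ENNReal

noncomputable section
namespace NBodyHJ

attribute [local instance] Classical.propDecidable

abbrev Conf (d N : ℕ) := Fin N → EuclideanSpace ℝ (Fin d)

variable {d N : ℕ}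

/-- The mass inner product on the configuration space. -/
def minner (m : Fin N → ℝ) (x y : Conf d N) : ℝ := ∑ i, m i * ⟪x i, y i⟫

/-- The mass norm on the configuration space. -/
def mnorm (m : Fin N → ℝ) (x : Conf d N) : ℝ := Real.sqrt (minner m x x)

/-- Membership in the zero-barycenter configuration space `X`. -/
def inX (m : Fin N → ℝ) (x : Conf d N) : Prop := ∑ i, m i • x i = 0

/-- Collision configurations. -/
def collision (x : Conf d N) : Prop := ∃ i j, i ≠ j ∧ x i = x j

/-- Membership in the collision-free zero-barycenter space `Ω`. -/
def inOmega (m : Fin N → ℝ) (x : Conf d N) : Prop := inX m x ∧ ¬ collision x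

/-- The Newtonian potential (with junk value `0` for a colliding pair). -/
def U (m : Fin N → ℝ) (x : Conf d N) : ℝ :=
  ∑ i : Fin N, ∑ j : Fin N, if i < j then m i * m j / ‖x i - x j‖ else 0

/-- The time interval `(t₀, T)`, where `T ∈ (t₀, +∞]` is extended-real. -/
def timeSet (t0 : ℝ) (T : EReal) : Set ℝ := {t : ℝ | t0 < t ∧ (t : EReal) < T}

/-- Membership of the pair (curve, derivative) `(φ, φ')` in `D₀^{1,2}(t₀, T)`:
`φ` starts at `0`, takes values in `X`, is the integral of `φ'` (hence locally
absolutely continuous), and `φ'` has finite `L²` mass norm on `(t₀, T)`. -/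
def InD (m : Fin N → ℝ) (t0 : ℝ) (T : EReal) (φ φ' : ℝ → Conf d N) : Prop :=
  φ t0 = 0 ∧
  (∀ t : ℝ, t0 ≤ t → (t : EReal) < T → inX m (φ t)) ∧
  (∀ t : ℝ, t0 ≤ t → (t : EReal) < T → φ t = ∫ s in Set.Ioc t0 t, φ' s) ∧
  (∀ t : ℝ, t0 ≤ t → (t : EReal) < T → IntegrableOn φ' (Set.Ioc t0 t)) ∧
  IntegrableOn (fun t => (mnorm m (φ' t)) ^ 2) (timeSet t0 T)

/-- The norm `‖φ‖_{D_T}`. -/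
def Dnorm (m : Fin N → ℝ) (t0 : ℝ) (T : EReal) (φ' : ℝ → Conf d N) : ℝ :=
  Real.sqrt (∫ t in timeSet t0 T, (mnorm m (φ' t)) ^ 2)

/-- The motion `γ(t) = φ(t) + t a + x - a` associated with `φ` in the hyperbolic case. -/
def hypCurve (a x : Conf d N) (φ : ℝ → Conf d N) (t : ℝ) : Conf d N :=
  φ t + t • a + x - a

/-- The integrand of the hyperbolic renormalized Lagrangian action. -/
def hypIntegrand (m : Fin N → ℝ) (a x : Conf d N) (φ φ' : ℝ → Conf d N) (t : ℝ) : ℝ :=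
  (mnorm m (φ' t)) ^ 2 / 2 + U m (hypCurve a x φ t) - U m (t • a)

/-- The hyperbolic renormalized Lagrangian action `A_{x,[1,T]}(φ)`, with values in
`ℝ ∪ {+∞}` : it equals the integral of the renormalized Lagrangian if this integrand is
integrable and the motion is a.e. collision-free, and `+∞` otherwise. -/
def hypAction (m : Fin N → ℝ) (a x : Conf d N) (T : EReal) (φ φ' : ℝ → Conf d N) : EReal :=
  if IntegrableOn (hypIntegrand m a x φ φ') (timeSet 1 T) ∧
      (∀ᵐ t ∂volume.restrict (timeSet 1 T), ¬ collision (hypCurve a x φ t))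
  then ((∫ t in timeSet 1 T, hypIntegrand m a x φ φ' t : ℝ) : EReal)
  else (⊤ : EReal)

/-- The infimum of the hyperbolic renormalized action over `D₀^{1,2}(1,T)`. -/
def hypInf (m : Fin N → ℝ) (a x : Conf d N) (T : EReal) : EReal :=
  ⨅ (φ : ℝ → Conf d N) (φ' : ℝ → Conf d N) (_ : InD m 1 T φ φ'), hypAction m a x T φ φ'

/-- The renormalized value function `v(x)` in the hyperbolic case. -/
def hypValue (m : Fin N → ℝ) (a x : Conf d N) : ℝ :=
  (hypInf m a x ⊤).toReal - minner m a x


/-- `bm` is a normalized minimal central configuration : it lies in `X`, is collision-free,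
has unit mass norm, and minimizes the Newtonian potential over the inertia ellipsoid
`E = {x ∈ X : ⟨x,x⟩_M = 1}` (whence it is a critical point of `U` restricted to `E`). -/
def IsMinCentral (m : Fin N → ℝ) (bm : Conf d N) : Prop :=
  inX m bm ∧ ¬ collision bm ∧ minner m bm bm = 1 ∧
    ∀ y : Conf d N, inX m y → ¬ collision y → minner m y y = 1 → U m bm ≤ U m y

/-- `β = (9 U(b_m)/2)^{1/3}`. -/
def beta (m : Fin N → ℝ) (bm : Conf d N) : ℝ := (9 * U m bm / 2) ^ ((1:ℝ)/3)

/-- The parabolic reference path `r₀(t) = β b_m t^{2/3}`. -/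
def parR0 (m : Fin N → ℝ) (bm : Conf d N) (t : ℝ) : Conf d N :=
  (beta m bm * t ^ ((2:ℝ)/3)) • bm

/-- The second derivative `r̈₀(t) = −(2/9) β b_m t^{−4/3}` of the parabolic reference path. -/
def parR0'' (m : Fin N → ℝ) (bm : Conf d N) (t : ℝ) : Conf d N :=
  (beta m bm * (-(2:ℝ)/9) * t ^ (-(4:ℝ)/3)) • bm

/-- The motion `γ(t) = φ(t) + r₀(t) + x − β b_m` associated with `φ` in the parabolic case. -/
def parCurve (m : Fin N → ℝ) (bm x : Conf d N) (φ : ℝ → Conf d N) (t : ℝ) : Conf d N :=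
  φ t + parR0 m bm t + x - beta m bm • bm

/-- The integrand of the parabolic renormalized Lagrangian action. -/
def parIntegrand (m : Fin N → ℝ) (bm x : Conf d N) (φ φ' : ℝ → Conf d N) (t : ℝ) : ℝ :=
  (mnorm m (φ' t)) ^ 2 / 2 + U m (parCurve m bm x φ t) - U m (parR0 m bm t)
    - minner m (parR0'' m bm t) (φ t)

/-- The parabolic renormalized Lagrangian action `A_{x,[1,T]}(φ)`, with values in
`ℝ ∪ {+∞}` : it equals the integral of the renormalized Lagrangian if this integrand is
integrable and the motion is a.e. collision-free, and `+∞` otherwise. -/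
def parAction (m : Fin N → ℝ) (bm x : Conf d N) (T : EReal) (φ φ' : ℝ → Conf d N) : EReal :=
  if IntegrableOn (parIntegrand m bm x φ φ') (timeSet 1 T) ∧
      (∀ᵐ t ∂volume.restrict (timeSet 1 T), ¬ collision (parCurve m bm x φ t))
  then ((∫ t in timeSet 1 T, parIntegrand m bm x φ φ' t : ℝ) : EReal)
  else (⊤ : EReal)

/-- The infimum of the parabolic renormalized action over `D₀^{1,2}(1,T)`. -/
def parInf (m : Fin N → ℝ) (bm x : Conf d N) (T : EReal) : EReal :=
  ⨅ (φ : ℝ → Conf d N) (φ' : ℝ → Conf d N) (_ : InD m 1 T φ φ'), parAction m bm x T φ φ'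

/-- The renormalized value function `v(x)` in the parabolic case. -/
def parValue (m : Fin N → ℝ) (bm x : Conf d N) : ℝ := (parInf m bm x ⊤).toReal

/-- The zero-barycenter configuration space `X`, as a set. -/
def setX (m : Fin N → ℝ) : Set (Conf d N) := {x | inX m x}

/-- `p ∈ D⁻v(x)` : the Fréchet subdifferential of `v` at `x`, computed within `X` and with
respect to the mass inner product; the condition states
`liminf_{y → x} (v(y) − v(x) − ⟨p, y − x⟩_M)/‖y − x‖_M ≥ 0`. -/
def InSubdiff (m : Fin N → ℝ) (v : Conf d N → ℝ) (x p : Conf d N) : Prop :=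
  ∀ ε > (0:ℝ), ∀ᶠ y in nhdsWithin x (setX m \ {x}),
    -(ε * mnorm m (y - x)) ≤ v y - v x - minner m p (y - x)

/-- `p ∈ D⁺v(x)` : the Fréchet superdifferential of `v` at `x`, computed within `X` and with
respect to the mass inner product; the condition states
`limsup_{y → x} (v(y) − v(x) − ⟨p, y − x⟩_M)/‖y − x‖_M ≤ 0`. -/
def InSuperdiff (m : Fin N → ℝ) (v : Conf d N → ℝ) (x p : Conf d N) : Prop :=
  ∀ ε > (0:ℝ), ∀ᶠ y in nhdsWithin x (setX m \ {x}),
    v y - v x - minner m p (y - x) ≤ ε * mnorm m (y - x)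

section Primitives

variable {E F : Type*} [NormedAddCommGroup E] [NormedSpace ℝ E]
  [NormedAddCommGroup F] [NormedSpace ℝ F]

/-- On `[a, b]`, the function `f` is a primitive of the integrable function `f'`. -/
def IsPrim (f f' : ℝ → E) (a b : ℝ) : Prop :=
  IntervalIntegrable f' volume a b ∧ ∀ t ∈ Icc a b, f t = f a + ∫ s in a..t, f' s

namespace IsPrim

variable {f f' g g' : ℝ → E} {a b : ℝ}

theorem intervalIntegrable_of_mem (hf : IsPrim f f' a b) {t : ℝ} (ht : t ∈ Icc a b) :
    IntervalIntegrable f' volume a t :=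
  hf.1.mono_set (by
    rw [uIcc_of_le ht.1, uIcc_of_le (ht.1.trans ht.2)]; exact Icc_subset_Icc_right ht.2)

theorem integral_eq (hf : IsPrim f f' a b) (hab : a ≤ b) : ∫ s in a..b, f' s = f b - f a := by
  rw [hf.2 b ⟨hab, le_rfl⟩]; abel

theorem continuousOn (hf : IsPrim f f' a b) (hab : a ≤ b) : ContinuousOn f (Icc a b) := by
  have h := intervalIntegral.continuousOn_primitive_interval' hf.1 (left_mem_uIcc)
  rw [uIcc_of_le hab] at h
  exact (continuousOn_const.add h).congr fun t ht => hf.2 t ht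

theorem clm (hf : IsPrim f f' a b) (L : E →L[ℝ] F) [CompleteSpace E] [CompleteSpace F] :
    IsPrim (fun t => L (f t)) (fun t => L (f' t)) a b := by
  have hint : ∀ {s t : ℝ}, IntervalIntegrable f' volume s t →
      IntervalIntegrable (fun t => L (f' t)) volume s t := fun h =>
    ⟨L.integrable_comp h.1, L.integrable_comp h.2⟩
  refine ⟨hint hf.1, fun t ht => ?_⟩
  beta_reduce
  rw [hf.2 t ht, map_add, L.intervalIntegral_comp_comm (hf.intervalIntegrable_of_mem ht)]

theorem const (c : E) : IsPrim (fun _ => c) (fun _ => 0) a b :=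
  ⟨intervalIntegrable_const, fun t _ => by simp⟩

theorem add (hf : IsPrim f f' a b) (hg : IsPrim g g' a b) :
    IsPrim (fun t => f t + g t) (fun t => f' t + g' t) a b := by
  refine ⟨hf.1.add hg.1, fun t ht => ?_⟩
  rw [intervalIntegral.integral_add (hf.intervalIntegrable_of_mem ht)
    (hg.intervalIntegrable_of_mem ht)]
  beta_reduce
  rw [hf.2 t ht, hg.2 t ht]
  abel

theorem sum {ι : Type*} (s : Finset ι) {f f' : ι → ℝ → E}
    (h : ∀ i ∈ s, IsPrim (f i) (f' i) a b) :
    IsPrim (fun t => ∑ i ∈ s, f i t) (fun t => ∑ i ∈ s, f' i t) a b := by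
  induction s using Finset.induction_on with
  | empty => simpa using const (0 : E)
  | insert i s hi ih =>
    simp only [Finset.sum_insert hi]
    exact (h i (Finset.mem_insert_self i s)).add
      (ih fun j hj => h j (Finset.mem_insert_of_mem hj))

theorem congr (hf : IsPrim f f' a b) (h : ∀ t ∈ Icc a b, g t = f t)
    (h' : ∀ t ∈ Ioc a b, g' t = f' t) (hab : a ≤ b) : IsPrim g g' a b := by
  have hE : ∀ t ∈ Icc a b, EqOn f' g' (uIoc a t) := fun t ht s hs => by
    rw [uIoc_of_le ht.1] at hs
    exact (h' s ⟨hs.1, hs.2.trans ht.2⟩).symm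
  refine ⟨hf.1.congr (hE b ⟨hab, le_rfl⟩), fun t ht => ?_⟩
  rw [h t ht, h a ⟨le_rfl, hab⟩, hf.2 t ht,
    intervalIntegral.integral_congr_ae (Eventually.of_forall fun s hs => hE t ht hs)]

theorem of_hasDerivAt [CompleteSpace E] (hab : a ≤ b) (hf : ∀ t ∈ Icc a b, HasDerivAt f (f' t) t)
    (hc : ContinuousOn f' (Icc a b)) : IsPrim f f' a b := by
  have hi : IntervalIntegrable f' volume a b :=
    ContinuousOn.intervalIntegrable (by rwa [uIcc_of_le hab])
  refine ⟨hi, fun t ht => ?_⟩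
  have hs : uIcc a t ⊆ Icc a b := by rw [uIcc_of_le ht.1]; exact Icc_subset_Icc_right ht.2
  rw [intervalIntegral.integral_eq_sub_of_hasDerivAt (fun s hs' => hf s (hs hs'))
    (hi.mono_set (by rwa [uIcc_of_le hab]))]
  abel

theorem of_hasDerivAt_Ioo [CompleteSpace E] (hab : a ≤ b) (hc : ContinuousOn f (Icc a b))
    (hf : ∀ t ∈ Ioo a b, HasDerivAt f (f' t) t)
    (hi : IntervalIntegrable f' volume a b) : IsPrim f f' a b := by
  refine ⟨hi, fun t ht => ?_⟩
  rw [intervalIntegral.integral_eq_sub_of_hasDerivAt_of_le ht.1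
    (hc.mono (Icc_subset_Icc_right ht.2)) (fun s hs' => hf s ⟨hs'.1, hs'.2.trans_le ht.2⟩)
    (hi.mono_set (by rw [uIcc_of_le hab, uIcc_of_le ht.1]; exact Icc_subset_Icc_right ht.2))]
  abel

theorem mono (hf : IsPrim f f' a b) {a' b' : ℝ} (ha : a ≤ a') (hab : a' ≤ b') (hb : b' ≤ b) :
    IsPrim f f' a' b' := by
  have hm : ∀ {t}, t ∈ Icc a b → IntervalIntegrable f' volume a t := fun ht =>
    hf.intervalIntegrable_of_mem ht
  have ha' : a' ∈ Icc a b := ⟨ha, hab.trans hb⟩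
  refine ⟨(hm ha').symm.trans (hm ⟨ha.trans hab, hb⟩), fun t ht => ?_⟩
  have ht' : t ∈ Icc a b := ⟨ha.trans ht.1, ht.2.trans hb⟩
  rw [hf.2 t ht', hf.2 a' ha',
    ← intervalIntegral.integral_add_adjacent_intervals (hm ha') ((hm ha').symm.trans (hm ht'))]
  abel

theorem comp_add_right (hf : IsPrim f f' a b) (h : ℝ) :
    IsPrim (fun t => f (t + h)) (fun t => f' (t + h)) (a - h) (b - h) := by
  refine ⟨hf.1.comp_add_right h, fun t ht => ?_⟩
  rw [intervalIntegral.integral_comp_add_right]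
  simp only [sub_add_cancel]
  exact hf.2 (t + h) ⟨by linarith [ht.1], by linarith [ht.2]⟩

theorem trans {c : ℝ} (hf : IsPrim f f' a b) (hg : IsPrim f f' b c) (hab : a ≤ b) :
    IsPrim f f' a c := by
  refine ⟨hf.1.trans hg.1, fun t ht => ?_⟩
  rcases le_total t b with htb | htb
  · exact hf.2 t ⟨ht.1, htb⟩
  · rw [hg.2 t ⟨htb, ht.2⟩, hf.2 b ⟨hab, le_rfl⟩,
      ← intervalIntegral.integral_add_adjacent_intervals hf.1
        (hg.intervalIntegrable_of_mem ⟨htb, ht.2⟩), add_assoc]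

theorem mul {f f' g g' : ℝ → ℝ} (hf : IsPrim f f' a b) (hg : IsPrim g g' a b) (hab : a ≤ b) :
    IsPrim (fun t => f t * g t) (fun t => f' t * g t + f t * g' t) a b := by
  refine ⟨(hf.1.mul_continuousOn (by rw [uIcc_of_le hab]; exact hg.continuousOn hab)).add
    (hg.1.continuousOn_mul (by rw [uIcc_of_le hab]; exact hf.continuousOn hab)), fun t ht => ?_⟩
  have hac : ∀ {k k' : ℝ → ℝ}, IsPrim k k' a b →
      AbsolutelyContinuousOnInterval (fun s => k a + ∫ r in a..s, k' r) a t := fun hk => by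
    refine AbsolutelyContinuousOnInterval.fun_add ?_
      ((hk.intervalIntegrable_of_mem ht).absolutelyContinuousOnInterval_intervalIntegral (by simp))
    exact (LipschitzWith.const _).lipschitzOnWith.absolutelyContinuousOnInterval
  have hd : ∀ {k k' : ℝ → ℝ}, IsPrim k k' a b → ∀ᵐ s, s ∈ uIoc a t →
      deriv (fun s => k a + ∫ r in a..s, k' r) s = k' s := fun hk => by
    filter_upwards [(hk.intervalIntegrable_of_mem ht).ae_hasDerivAt_integral] with s hs hst
    exact ((hs (uIoc_subset_uIcc hst) a (by simp)).const_add _).deriv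
  have key := (hac hf).integral_deriv_mul_eq_sub (hac hg)
  rw [← hf.2 t ht, ← hg.2 t ht] at key
  simp only [intervalIntegral.integral_same, add_zero] at key
  beta_reduce
  rw [← sub_eq_iff_eq_add', ← key]
  refine intervalIntegral.integral_congr_ae ?_
  filter_upwards [hd hf, hd hg] with s hfs hgs hs
  have hs' : s ∈ Icc a b := by
    rw [uIoc_of_le ht.1] at hs
    exact ⟨hs.1.le, hs.2.trans ht.2⟩
  rw [hfs hs, hgs hs, ← hf.2 s hs', ← hg.2 s hs']

end IsPrim

end Primitives

section MassInner

variable {m : Fin N → ℝ}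

theorem minner_comm (x y : Conf d N) : minner m x y = minner m y x := by
  simp only [minner, real_inner_comm]

theorem minner_add_left (x y z : Conf d N) :
    minner m (x + y) z = minner m x z + minner m y z := by
  simp only [minner, Pi.add_apply, inner_add_left, mul_add, Finset.sum_add_distrib]

theorem minner_add_right (x y z : Conf d N) :
    minner m x (y + z) = minner m x y + minner m x z := by
  simp only [minner, Pi.add_apply, inner_add_right, mul_add, Finset.sum_add_distrib]

theorem minner_smul_left (c : ℝ) (x y : Conf d N) : minner m (c • x) y = c * minner m x y := by
  simp only [minner, Pi.smul_apply, real_inner_smul_left, Finset.mul_sum]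
  exact Finset.sum_congr rfl fun i _ => by ring

theorem minner_smul_right (c : ℝ) (x y : Conf d N) : minner m x (c • y) = c * minner m x y := by
  rw [minner_comm, minner_smul_left, minner_comm]

theorem minner_neg_left (x y : Conf d N) : minner m (-x) y = -minner m x y := by
  rw [← neg_one_smul ℝ x, minner_smul_left]; ring

theorem minner_neg_right (x y : Conf d N) : minner m x (-y) = -minner m x y := by
  rw [minner_comm, minner_neg_left, minner_comm]

theorem minner_sub_left (x y z : Conf d N) :
    minner m (x - y) z = minner m x z - minner m y z := by
  rw [sub_eq_add_neg, minner_add_left, minner_neg_left, sub_eq_add_neg]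

theorem minner_sub_right (x y z : Conf d N) :
    minner m x (y - z) = minner m x y - minner m x z := by
  rw [sub_eq_add_neg, minner_add_right, minner_neg_right, sub_eq_add_neg]

theorem minner_self_nonneg (hm : ∀ i, 0 < m i) (x : Conf d N) : 0 ≤ minner m x x :=
  Finset.sum_nonneg fun i _ => mul_nonneg (hm i).le real_inner_self_nonneg

theorem mnorm_sq (hm : ∀ i, 0 < m i) (x : Conf d N) : mnorm m x ^ 2 = minner m x x :=
  Real.sq_sqrt (minner_self_nonneg hm x)

theorem mnorm_nonneg (x : Conf d N) : 0 ≤ mnorm m x := Real.sqrt_nonneg _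

/-- Young's inequality for the mass inner product. -/
theorem two_mul_abs_minner_le (hm : ∀ i, 0 < m i) (x y : Conf d N) :
    2 * |minner m x y| ≤ minner m x x + minner m y y := by
  have h1 := minner_self_nonneg hm (x - y)
  have h2 := minner_self_nonneg hm (x + y)
  simp only [minner_sub_left, minner_sub_right, minner_add_left, minner_add_right] at h1 h2
  rw [minner_comm y x] at h1 h2
  rcases abs_cases (minner m x y) with h | h <;> linarith

theorem norm_sq_le_minner (hm : ∀ i, 0 < m i) :
    ∃ c > 0, ∀ x : Conf d N, ‖x‖ ^ 2 ≤ c * minner m x x := by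
  refine ⟨1 + ∑ i, (m i)⁻¹, add_pos_of_pos_of_nonneg one_pos
    (Finset.sum_nonneg fun i _ => (inv_pos.2 (hm i)).le), fun x => ?_⟩
  have hc : 0 ≤ ∑ i, (m i)⁻¹ := Finset.sum_nonneg fun i _ => (inv_pos.2 (hm i)).le
  have hx := minner_self_nonneg hm x
  have hi : ∀ i, ‖x i‖ ^ 2 ≤ (1 + ∑ i, (m i)⁻¹) * minner m x x := fun i => by
    have h1 : m i * ‖x i‖ ^ 2 ≤ minner m x x := by
      rw [← real_inner_self_eq_norm_sq]
      exact Finset.single_le_sum (f := fun i => m i * ⟪x i, x i⟫)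
        (fun i _ => mul_nonneg (hm i).le real_inner_self_nonneg) (Finset.mem_univ i)
    have h2 : (m i)⁻¹ ≤ 1 + ∑ i, (m i)⁻¹ := by
      have := Finset.single_le_sum (f := fun i => (m i)⁻¹)
        (fun i _ => (inv_pos.2 (hm i)).le) (Finset.mem_univ i)
      linarith
    calc ‖x i‖ ^ 2 = (m i)⁻¹ * (m i * ‖x i‖ ^ 2) := by
          rw [← mul_assoc, inv_mul_cancel₀ (hm i).ne', one_mul]
      _ ≤ (m i)⁻¹ * minner m x x := mul_le_mul_of_nonneg_left h1 (inv_pos.2 (hm i)).le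
      _ ≤ _ := mul_le_mul_of_nonneg_right h2 hx
  have h0 : 0 ≤ (1 + ∑ i, (m i)⁻¹) * minner m x x := by positivity
  rw [← Real.sqrt_le_sqrt_iff h0, Real.sqrt_sq (norm_nonneg _)]
  refine (pi_norm_le_iff_of_nonneg (Real.sqrt_nonneg _)).2 fun i => Real.le_sqrt_of_sq_le (hi i)

/-- The mass inner product with a fixed configuration, as a continuous linear form. -/
def minnerCLM (m : Fin N → ℝ) (x : Conf d N) : Conf d N →L[ℝ] ℝ :=
  ∑ i, m i • (innerSL ℝ (x i)).comp (ContinuousLinearMap.proj i)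

theorem minnerCLM_apply (x y : Conf d N) : minnerCLM m x y = minner m x y := by
  simp [minnerCLM, minner]

/-- The barycenter, up to normalization, as a continuous linear map. -/
def baryCLM (d : ℕ) (m : Fin N → ℝ) : Conf d N →L[ℝ] EuclideanSpace ℝ (Fin d) :=
  ∑ i, m i • ContinuousLinearMap.proj i

theorem inX_iff (x : Conf d N) : inX m x ↔ baryCLM d m x = 0 := by
  simp [inX, baryCLM]

theorem inX_add {x y : Conf d N} (hx : inX m x) (hy : inX m y) : inX m (x + y) := by
  rw [inX_iff] at *; rw [map_add, hx, hy, add_zero]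

theorem inX_sub {x y : Conf d N} (hx : inX m x) (hy : inX m y) : inX m (x - y) := by
  rw [inX_iff] at *; rw [map_sub, hx, hy, sub_zero]

theorem inX_smul (c : ℝ) {x : Conf d N} (hx : inX m x) : inX m (c • x) := by
  rw [inX_iff] at *; rw [map_smul, hx, smul_zero]

theorem inX_zero : inX m (0 : Conf d N) := by simp [inX]

theorem continuous_minner_self : Continuous fun x : Conf d N => minner m x x := by
  unfold minner; fun_prop

theorem IsPrim.minner {f f' g g' : ℝ → Conf d N} {a b : ℝ} (hf : IsPrim f f' a b)
    (hg : IsPrim g g' a b) (hab : a ≤ b) :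
    IsPrim (fun t => minner m (f t) (g t))
      (fun t => minner m (f' t) (g t) + minner m (f t) (g' t)) a b := by
  have hcoord : ∀ {k k' : ℝ → Conf d N}, IsPrim k k' a b → ∀ (i : Fin N) (l : Fin d),
      IsPrim (fun t => k t i l) (fun t => k' t i l) a b := fun hk i l =>
    hk.clm ((EuclideanSpace.proj l).comp (ContinuousLinearMap.proj (R := ℝ) i))
  have h := IsPrim.sum (a := a) (b := b) Finset.univ fun i _ =>
    (IsPrim.const (a := a) (b := b) (m i)).mul
      (IsPrim.sum Finset.univ fun l _ => (hcoord hf i l).mul (hcoord hg i l) hab) hab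
  refine h.congr (fun t _ => ?_) (fun t _ => ?_) hab
  · simp only [NBodyHJ.minner, PiLp.inner_apply]
    exact Finset.sum_congr rfl fun i _ => by simp [mul_comm]
  · simp only [NBodyHJ.minner, PiLp.inner_apply]
    rw [← Finset.sum_add_distrib]
    refine Finset.sum_congr rfl fun i _ => ?_
    rw [zero_mul, zero_add, ← mul_add, Finset.sum_add_distrib]
    simp [mul_comm]

/-- Jensen's inequality for the squared mass norm. -/
theorem minner_sub_self_le (hm : ∀ i, 0 < m i) {f f' : ℝ → Conf d N} {a b : ℝ} (hab : a < b)
    (hf : IsPrim f f' a b) (hi : IntervalIntegrable (fun t => minner m (f' t) (f' t)) volume a b) :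
    minner m (f b - f a) (f b - f a) ≤ (b - a) * ∫ t in a..b, minner m (f' t) (f' t) := by
  set w := f b - f a with hw
  have hlin : IntervalIntegrable (fun t => minner m w (f' t)) volume a b := by
    simpa only [minnerCLM_apply] using (hf.clm (minnerCLM m w)).1
  have hval : ∫ t in a..b, minner m w (f' t) = minner m w w := by
    have := (hf.clm (minnerCLM m w)).integral_eq hab.le
    simp only [minnerCLM_apply] at this
    rw [this, ← minner_sub_right]
  have hpos : 0 < b - a := sub_pos.2 hab
  have hle : ∫ t in a..b, (2 * (b - a)⁻¹ * minner m w (f' t) - (b - a)⁻¹ ^ 2 * minner m w w)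
      ≤ ∫ t in a..b, minner m (f' t) (f' t) := by
    refine intervalIntegral.integral_mono_on hab.le
      ((hlin.const_mul _).sub intervalIntegrable_const) hi fun t _ => ?_
    have h := minner_self_nonneg hm (f' t - (b - a)⁻¹ • w)
    simp only [minner_sub_left, minner_sub_right, minner_smul_left, minner_smul_right] at h
    rw [minner_comm (f' t) w] at h
    nlinarith
  rw [intervalIntegral.integral_sub (hlin.const_mul _) intervalIntegrable_const,
    intervalIntegral.integral_const_mul, hval, intervalIntegral.integral_const, smul_eq_mul] at hle
  have h2 := mul_le_mul_of_nonneg_left hle hpos.le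
  refine le_trans (le_of_eq ?_) h2
  field_simp
  ring

end MassInner

section Potential

variable {m : Fin N → ℝ}

theorem not_collision_iff (x : Conf d N) : ¬ collision x ↔ ∀ i j, i ≠ j → x i ≠ x j := by
  simp [collision]

theorem U_nonneg (hm : ∀ i, 0 < m i) (x : Conf d N) : 0 ≤ U m x := by
  refine Finset.sum_nonneg fun i _ => Finset.sum_nonneg fun j _ => ?_
  split_ifs
  · exact div_nonneg (mul_pos (hm i) (hm j)).le (norm_nonneg _)
  · exact le_rfl

theorem U_pos (hN : 2 ≤ N) (hm : ∀ i, 0 < m i) {x : Conf d N} (hx : ¬ collision x) :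
    0 < U m x := by
  have hnn : ∀ i j : Fin N, 0 ≤ if i < j then m i * m j / ‖x i - x j‖ else 0 := fun i j => by
    split_ifs
    · exact div_nonneg (mul_pos (hm i) (hm j)).le (norm_nonneg _)
    · exact le_rfl
  let i : Fin N := ⟨0, by omega⟩
  let j : Fin N := ⟨1, by omega⟩
  have hij : i < j := by simp [i, j]
  refine Finset.sum_pos' (fun i _ => Finset.sum_nonneg fun j _ => hnn i j)
    ⟨i, Finset.mem_univ _, Finset.sum_pos' (fun j _ => hnn i j) ⟨j, Finset.mem_univ _, ?_⟩⟩
  rw [if_pos hij]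
  exact div_pos (mul_pos (hm i) (hm j))
    (norm_pos_iff.2 (sub_ne_zero.2 ((not_collision_iff x).1 hx i j hij.ne)))

theorem U_smul {c : ℝ} (hc : 0 ≤ c) (x : Conf d N) : U m (c • x) = c⁻¹ * U m x := by
  simp only [U, Finset.mul_sum]
  refine Finset.sum_congr rfl fun i _ => Finset.sum_congr rfl fun j _ => ?_
  split_ifs
  · rw [Pi.smul_apply, Pi.smul_apply, ← smul_sub, norm_smul, Real.norm_of_nonneg hc,
      div_eq_mul_inv, div_eq_mul_inv, mul_inv]
    ring
  · simp

theorem continuousAt_U {x : Conf d N} (hx : ¬ collision x) : ContinuousAt (U m) x := by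
  unfold U
  refine tendsto_finsetSum _ fun i _ => tendsto_finsetSum _ fun j _ => ?_
  split_ifs with hij
  · refine ContinuousAt.div continuousAt_const (by fun_prop) ?_
    exact norm_ne_zero_iff.2 (sub_ne_zero.2 ((not_collision_iff x).1 hx i j hij.ne))
  · exact tendsto_const_nhds

theorem isOpen_not_collision : IsOpen {x : Conf d N | ¬ collision x} := by
  have : {x : Conf d N | ¬ collision x} = ⋂ i, ⋂ j, ⋂ _ : i ≠ j, {x | x i ≠ x j} := by
    ext x; simp [not_collision_iff]
  rw [this]
  refine isOpen_iInter_of_finite fun i => isOpen_iInter_of_finite fun j =>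
    isOpen_iInter_of_finite fun _ => ?_
  exact isOpen_ne_fun (continuous_apply i) (continuous_apply j)

theorem not_collision_smul {c : ℝ} (hc : c ≠ 0) {x : Conf d N} (hx : ¬ collision x) :
    ¬ collision (c • x) := by
  rw [not_collision_iff] at *
  intro i j hij h
  exact hx i j hij (smul_right_injective _ hc h)

theorem mnorm_pos (hN : 2 ≤ N) (hm : ∀ i, 0 < m i) {x : Conf d N} (hx : ¬ collision x) :
    0 < mnorm m x := by
  refine Real.sqrt_pos.2 ((minner_self_nonneg hm x).lt_of_ne' fun h => ?_)
  obtain ⟨c, -, hc⟩ := norm_sq_le_minner (d := d) hm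
  have h0 := hc x
  rw [h, mul_zero] at h0
  have hx0 : x = 0 := norm_eq_zero.1 (pow_eq_zero_iff two_ne_zero |>.1
    (le_antisymm h0 (sq_nonneg _)))
  have hij : (⟨0, by omega⟩ : Fin N) ≠ ⟨1, by omega⟩ := by simp
  exact (not_collision_iff x).1 hx _ _ hij (by simp [hx0])

/-- By minimality and homogeneity, `U` dominates the Kepler potential. -/
theorem IsMinCentral.div_mnorm_le_U (hN : 2 ≤ N) (hm : ∀ i, 0 < m i) {bm : Conf d N}
    (hbm : IsMinCentral m bm) {x : Conf d N} (hxX : inX m x) (hx : ¬ collision x) :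
    U m bm / mnorm m x ≤ U m x := by
  have hp := mnorm_pos hN hm hx
  have h := hbm.2.2.2 ((mnorm m x)⁻¹ • x) (inX_smul _ hxX)
    (not_collision_smul (inv_pos.2 hp).ne' hx) (by
      rw [minner_smul_left, minner_smul_right, ← mnorm_sq hm]
      field_simp)
  rw [U_smul (inv_pos.2 hp).le, inv_inv] at h
  rwa [div_le_iff₀' hp]

end Potential

section Powers

theorem rpow_neg_sub_rpow_neg_le {s t h : ℝ} (hs : 0 ≤ s) (ht : 0 < t) (hh : 0 ≤ h) :
    t ^ (-s) - (t + h) ^ (-s) ≤ s * h * t ^ (-s - 1) := by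
  have hu : 0 < 1 + h / t := by positivity
  have h1 : t + h = t * (1 + h / t) := by field_simp
  have h2 : 1 - s * (h / t) ≤ (1 + h / t) ^ (-s) := by
    rw [Real.rpow_def_of_pos hu]
    have h3 := Real.add_one_le_exp (Real.log (1 + h / t) * -s)
    have h4 := Real.log_le_sub_one_of_pos hu
    have h5 := mul_le_mul_of_nonneg_right h4 hs
    linarith
  rw [h1, Real.mul_rpow ht.le hu.le, Real.rpow_sub_one ht.ne']
  have h6 := mul_le_mul_of_nonneg_left h2 (Real.rpow_nonneg ht.le (-s))
  calc t ^ (-s) - t ^ (-s) * (1 + h / t) ^ (-s) ≤ t ^ (-s) * (s * (h / t)) := by linarith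
    _ = s * h * (t ^ (-s) / t) := by ring

theorem rpow_neg_add_le {s t h : ℝ} (hs : 0 ≤ s) (ht : 0 < t) (hh : 0 ≤ h) :
    (t + h) ^ (-s) ≤ t ^ (-s) :=
  Real.rpow_le_rpow_of_nonpos ht (by linarith) (by linarith)

theorem rpow_two_thirds_add_sub_le {t h : ℝ} (ht : 1 ≤ t) (hh : 0 ≤ h) :
    (t + h) ^ ((2 : ℝ) / 3) - t ^ ((2 : ℝ) / 3) ≤ h := by
  have ht0 : 0 < t := by linarith
  have hu : 1 ≤ 1 + h / t := by have : 0 ≤ h / t := by positivity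
                                linarith
  have h1 : t + h = t * (1 + h / t) := by field_simp
  have h2 : (1 + h / t) ^ ((2 : ℝ) / 3) ≤ 1 + h / t := by
    simpa using Real.rpow_le_rpow_of_exponent_le hu (show (2 : ℝ) / 3 ≤ 1 by norm_num)
  have h3 : t ^ ((2 : ℝ) / 3) ≤ t := by
    simpa using Real.rpow_le_rpow_of_exponent_le ht (show (2 : ℝ) / 3 ≤ 1 by norm_num)
  rw [h1, Real.mul_rpow ht0.le (by linarith)]
  have h4 : 0 ≤ t ^ ((2 : ℝ) / 3) := Real.rpow_nonneg ht0.le _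
  have h5 : 0 ≤ h / t := by positivity
  have h6 := mul_le_mul_of_nonneg_left h2 h4
  have h7 := mul_le_mul_of_nonneg_right h3 h5
  have h8 : t * (h / t) = h := by field_simp
  linarith

end Powers

section ReferencePath

variable {m : Fin N → ℝ} {bm : Conf d N}

/-- The speed of the reference path along `bm`. -/
def speed (m : Fin N → ℝ) (bm : Conf d N) (t : ℝ) : ℝ :=
  beta m bm * (2 / 3) * t ^ (-((1 : ℝ) / 3))

/-- The acceleration of the reference path along `bm`. -/
def accel (m : Fin N → ℝ) (bm : Conf d N) (t : ℝ) : ℝ :=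
  beta m bm * (-(2 : ℝ) / 9) * t ^ (-(4 : ℝ) / 3)

theorem beta_pos (hN : 2 ≤ N) (hm : ∀ i, 0 < m i) (hbm : IsMinCentral m bm) :
    0 < beta m bm := by
  have := U_pos hN hm hbm.2.1
  unfold beta; positivity

theorem beta_pow_three (hm : ∀ i, 0 < m i) : beta m bm ^ 3 = 9 * U m bm / 2 := by
  have := U_nonneg hm bm
  rw [beta, ← Real.rpow_natCast, ← Real.rpow_mul (by positivity)]
  norm_num

theorem hasDerivAt_radius {t : ℝ} (ht : 0 < t) :
    HasDerivAt (fun t => beta m bm * t ^ ((2 : ℝ) / 3)) (speed m bm t) t := by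
  refine ((Real.hasDerivAt_rpow_const (p := (2 : ℝ) / 3) (Or.inl ht.ne')).const_mul
    (beta m bm)).congr_deriv ?_
  rw [speed, show (2 : ℝ) / 3 - 1 = -(1 / 3) by norm_num]
  ring

theorem hasDerivAt_speed {t : ℝ} (ht : 0 < t) :
    HasDerivAt (speed m bm) (accel m bm t) t := by
  refine ((Real.hasDerivAt_rpow_const (p := -((1 : ℝ) / 3)) (Or.inl ht.ne')).const_mul
    (beta m bm * (2 / 3))).congr_deriv ?_
  rw [accel, show -((1 : ℝ) / 3) - 1 = -4 / 3 by norm_num]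
  ring

theorem continuousOn_speed : ContinuousOn (speed m bm) (Ioi 0) := fun _ ht =>
  (hasDerivAt_speed ht).continuousAt.continuousWithinAt

theorem continuousOn_accel : ContinuousOn (accel m bm) (Ioi 0) := fun t ht =>
  (continuousAt_const.mul
    (Real.continuousAt_rpow_const t _ (Or.inl (ne_of_gt ht)))).continuousWithinAt

theorem measurable_speed : Measurable (speed m bm) := by unfold speed; fun_prop

theorem measurable_accel : Measurable (accel m bm) := by unfold accel; fun_prop

theorem Icc_subset_Ioi_zero {a b : ℝ} (ha : 0 < a) : Icc a b ⊆ Ioi 0 :=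
  fun _ ht => ha.trans_le ht.1

theorem isPrim_radius {a b : ℝ} (ha : 0 < a) (hab : a ≤ b) :
    IsPrim (fun t => beta m bm * t ^ ((2 : ℝ) / 3)) (speed m bm) a b :=
  IsPrim.of_hasDerivAt hab (fun _ ht => hasDerivAt_radius (Icc_subset_Ioi_zero ha ht))
    (continuousOn_speed.mono (Icc_subset_Ioi_zero ha))

theorem isPrim_speed {a b : ℝ} (ha : 0 < a) (hab : a ≤ b) :
    IsPrim (speed m bm) (accel m bm) a b :=
  IsPrim.of_hasDerivAt hab (fun _ ht => hasDerivAt_speed (Icc_subset_Ioi_zero ha ht))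
    (continuousOn_accel.mono (Icc_subset_Ioi_zero ha))

theorem isPrim_parR0 {a b : ℝ} (ha : 0 < a) (hab : a ≤ b) :
    IsPrim (parR0 m bm) (fun t => speed m bm t • bm) a b :=
  (isPrim_radius ha hab).clm ((ContinuousLinearMap.id ℝ ℝ).smulRight bm)

/-- The reference path has zero energy. -/
theorem U_parR0 (hN : 2 ≤ N) (hm : ∀ i, 0 < m i) (hbm : IsMinCentral m bm) {t : ℝ}
    (ht : 0 < t) : U m (parR0 m bm t) = speed m bm t ^ 2 / 2 := by
  have hb := beta_pos hN hm hbm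
  have h3 := beta_pow_three (bm := bm) hm
  have hU : U m bm = 2 / 9 * beta m bm ^ 3 := by linarith
  have hr : 0 < t ^ ((2 : ℝ) / 3) := Real.rpow_pos_of_pos ht _
  have hs : (t ^ (-((1 : ℝ) / 3))) ^ 2 = (t ^ ((2 : ℝ) / 3))⁻¹ := by
    rw [← Real.rpow_natCast, ← Real.rpow_mul ht.le, ← Real.rpow_neg ht.le]
    norm_num
  rw [parR0, U_smul (by positivity), hU, speed, mul_pow, hs]
  field_simp
  norm_num

theorem accel_eq (hm : ∀ i, 0 < m i) (hb : 0 < beta m bm) {t : ℝ} (ht : 0 < t) :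
    accel m bm t = -(U m bm / (beta m bm * t ^ ((2 : ℝ) / 3)) ^ 2) := by
  have h3 := beta_pow_three (bm := bm) hm
  have hU : U m bm = 2 / 9 * beta m bm ^ 3 := by linarith
  have hs : t ^ (-(4 : ℝ) / 3) = ((t ^ ((2 : ℝ) / 3)) ^ 2)⁻¹ := by
    rw [← Real.rpow_natCast, ← Real.rpow_mul ht.le, ← Real.rpow_neg ht.le]
    norm_num
  have hr : 0 < t ^ ((2 : ℝ) / 3) := Real.rpow_pos_of_pos ht _
  rw [accel, hs, hU]
  field_simp

theorem radius_pow_three (hm : ∀ i, 0 < m i) {t : ℝ} (ht : 0 < t) :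
    (beta m bm * t ^ ((2 : ℝ) / 3)) ^ 3 = 9 * U m bm / 2 * t ^ 2 := by
  rw [mul_pow, beta_pow_three hm, ← Real.rpow_natCast (t ^ ((2 : ℝ) / 3)), ← Real.rpow_mul ht.le]
  norm_num

theorem speed_nonneg (hb : 0 < beta m bm) {t : ℝ} (ht : 0 < t) : 0 ≤ speed m bm t := by
  unfold speed; positivity

theorem abs_speed_sub_le (hb : 0 < beta m bm) {t h : ℝ} (ht : 0 < t) (hh : 0 ≤ h) :
    |speed m bm (t + h) - speed m bm t| ≤ beta m bm * h * t ^ (-(4 : ℝ) / 3) := by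
  have h1 := rpow_neg_sub_rpow_neg_le (s := 1 / 3) (by norm_num) ht hh
  have h2 := rpow_neg_add_le (s := 1 / 3) (by norm_num) ht hh
  rw [show -((1 : ℝ) / 3) - 1 = -4 / 3 by norm_num] at h1
  have h0 : 0 ≤ h * t ^ (-(4 : ℝ) / 3) := by positivity
  have h3 := mul_le_mul_of_nonneg_left h1 hb.le
  have h4 := mul_le_mul_of_nonneg_left h2 hb.le
  have h5 := mul_nonneg hb.le h0
  rw [abs_le, speed, speed]
  constructor <;> nlinarith

theorem abs_accel_sub_le (hb : 0 < beta m bm) {t h : ℝ} (ht : 0 < t) (hh : 0 ≤ h) :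
    |accel m bm (t + h) - accel m bm t| ≤ beta m bm * h * t ^ (-(7 : ℝ) / 3) := by
  have h1 := rpow_neg_sub_rpow_neg_le (s := 4 / 3) (by norm_num) ht hh
  have h2 := rpow_neg_add_le (s := 4 / 3) (by norm_num) ht hh
  rw [show -((4 : ℝ) / 3) - 1 = -7 / 3 by norm_num] at h1
  have h0 : 0 ≤ h * t ^ (-(7 : ℝ) / 3) := by positivity
  have h3 := mul_le_mul_of_nonneg_left h1 hb.le
  have h4 := mul_le_mul_of_nonneg_left h2 hb.le
  have h5 := mul_nonneg hb.le h0
  rw [abs_le, accel, accel, neg_div]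
  constructor <;> nlinarith

theorem tendsto_speed : Tendsto (speed m bm) atTop (𝓝 0) := by
  have h := (tendsto_rpow_neg_atTop (show (0 : ℝ) < 1 / 3 by norm_num)).const_mul
    (beta m bm * (2 / 3))
  rwa [mul_zero] at h

theorem abs_radius_sub_le (hb : 0 < beta m bm) {t h : ℝ} (ht : 1 ≤ t) (hh : 0 ≤ h) :
    |beta m bm * (t + h) ^ ((2 : ℝ) / 3) - beta m bm * t ^ ((2 : ℝ) / 3)| ≤ beta m bm * h := by
  rw [← mul_sub, abs_mul, abs_of_pos hb]
  refine mul_le_mul_of_nonneg_left ?_ hb.le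
  rw [abs_of_nonneg (sub_nonneg.2 (Real.rpow_le_rpow (by linarith) (by linarith) (by norm_num)))]
  exact rpow_two_thirds_add_sub_le ht hh

end ReferencePath

section Action

variable {m : Fin N → ℝ} {bm x y : Conf d N} {φ φ' ψ ψ' : ℝ → Conf d N}

theorem timeSet_top (a : ℝ) : timeSet a ⊤ = Ioi a := by
  ext t; simp [timeSet, EReal.coe_lt_top]

theorem inD_top_iff (hm : ∀ i, 0 < m i) : InD m 1 ⊤ φ φ' ↔
    φ 1 = 0 ∧ (∀ t, 1 ≤ t → inX m (φ t)) ∧ (∀ t, 1 ≤ t → IsPrim φ φ' 1 t) ∧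
      IntegrableOn (fun t => minner m (φ' t) (φ' t)) (Ioi 1) := by
  simp only [InD, EReal.coe_lt_top, true_imp_iff, timeSet_top, mnorm_sq hm]
  constructor
  · rintro ⟨h0, hX, hp, hi, h2⟩
    refine ⟨h0, hX, fun t ht => ⟨(intervalIntegrable_iff_integrableOn_Ioc_of_le ht).2 (hi t ht),
      fun s hs => ?_⟩, h2⟩
    rw [h0, zero_add, intervalIntegral.integral_of_le hs.1, ← hp s hs.1]
  · rintro ⟨h0, hX, hp, h2⟩
    refine ⟨h0, hX, fun t ht => ?_, fun t ht =>
      (intervalIntegrable_iff_integrableOn_Ioc_of_le ht).1 (hp t ht).1, h2⟩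
    rw [(hp t ht).2 t ⟨ht, le_rfl⟩, h0, zero_add, intervalIntegral.integral_of_le ht]

theorem parR0_one : parR0 m bm 1 = beta m bm • bm := by simp [parR0]

theorem parCurve_one (h0 : φ 1 = 0) : parCurve m bm x φ 1 = x := by
  simp [parCurve, h0, parR0_one]

theorem inX_parCurve (hb : inX m bm) (hx : inX m x) {t : ℝ} (hφ : inX m (φ t)) :
    inX m (parCurve m bm x φ t) :=
  inX_sub (inX_add (inX_add hφ (inX_smul _ hb)) hx) (inX_smul _ hb)

theorem isPrim_parCurve {t : ℝ} (ht : 1 ≤ t) (hp : IsPrim φ φ' 1 t) :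
    IsPrim (parCurve m bm x φ) (fun s => φ' s + speed m bm s • bm) 1 t := by
  refine ((hp.add (isPrim_parR0 (m := m) (bm := bm) one_pos ht)).add
    (IsPrim.const (x - beta m bm • bm))).congr (fun s _ => ?_) (fun s _ => ?_) ht
  · simp only [parCurve]; abel
  · simp

theorem isPrim_minner_left {a b : ℝ} (hp : IsPrim φ φ' a b) (z : Conf d N) :
    IsPrim (fun t => minner m z (φ t)) (fun t => minner m z (φ' t)) a b := by
  simpa only [minnerCLM_apply] using hp.clm (minnerCLM m z)

theorem parIntegrand_eq (hN : 2 ≤ N) (hm : ∀ i, 0 < m i) (hbm : IsMinCentral m bm) {t : ℝ}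
    (ht : 0 < t) : parIntegrand m bm x φ φ' t = minner m (φ' t) (φ' t) / 2
      + U m (parCurve m bm x φ t) - speed m bm t ^ 2 / 2 - accel m bm t * minner m bm (φ t) := by
  rw [parIntegrand, mnorm_sq hm, U_parR0 hN hm hbm ht, parR0'', minner_smul_left, accel]

/-- The Kepler potential minus its linearization at distance `r`, bounded from below by a
quadratic form. -/
theorem kepler_lower_bound {u r s q c : ℝ} (hu : 0 ≤ u) (hr : 0 < r) (hs : 0 < s)
    (hsq : s ^ 2 = r ^ 2 + 2 * r * c + q) :
    -(u / (2 * r ^ 3) * q) ≤ u / s - u / r + u / r ^ 2 * c := by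
  have hq : q = s ^ 2 - r ^ 2 - 2 * r * c := by linarith
  have key : u / s - u / r + u / r ^ 2 * c + u / (2 * r ^ 3) * q =
      u * ((s - r) ^ 2 * (s + 2 * r)) / (2 * r ^ 3 * s) := by
    rw [hq]
    field_simp
    ring
  have : 0 ≤ u * ((s - r) ^ 2 * (s + 2 * r)) / (2 * r ^ 3 * s) := by positivity
  linarith

/-- The renormalized action is bounded from below by a quadratic function of the initial
configuration. -/
theorem le_integral_parIntegrand (hN : 2 ≤ N) (hm : ∀ i, 0 < m i) (hbm : IsMinCentral m bm)
    (hx : inX m x) (hφ : InD m 1 ⊤ φ φ')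
    (hi : IntegrableOn (parIntegrand m bm x φ φ') (Ioi 1))
    (hc : ∀ᵐ t ∂volume.restrict (Ioi 1), ¬ collision (parCurve m bm x φ t)) :
    -((1 + beta m bm) * (1 + minner m (x - beta m bm • bm) (x - beta m bm • bm)))
      ≤ ∫ t in Ioi 1, parIntegrand m bm x φ φ' t := by
  obtain ⟨h0, hX, hp, -⟩ := (inD_top_iff hm).1 hφ
  have hb := beta_pos hN hm hbm
  set z := x - beta m bm • bm with hz
  refine ge_of_tendsto (intervalIntegral_tendsto_integral_Ioi 1 hi tendsto_id) ?_
  filter_upwards [eventually_ge_atTop 1] with T hT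
  have hprim : IsPrim (fun t => φ t + z) φ' 1 T :=
    ((hp T hT).add (IsPrim.const z)).congr (fun _ _ => rfl) (fun _ _ => (add_zero _).symm) hT
  have hinv : IsPrim (fun t : ℝ => (6 * t)⁻¹) (fun t => -(6 * t ^ 2)⁻¹) 1 T := by
    refine IsPrim.of_hasDerivAt hT (fun t ht => ?_) ?_
    · have ht0 : t ≠ 0 := by linarith [ht.1]
      refine (((hasDerivAt_id t).const_mul 6).fun_inv (by simpa using ht0)).congr_deriv ?_
      simp only [id]
      field_simp
    · refine ContinuousOn.neg (ContinuousOn.inv₀ (by fun_prop) fun t ht => ?_)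
      have : 0 < t := by linarith [ht.1]
      positivity
  have hF := (hprim.minner (m := m) hprim hT).mul hinv hT
  have hG := (isPrim_speed (m := m) (bm := bm) one_pos hT).mul
    (IsPrim.const (minner m bm z)) hT
  have hH := hF.add hG
  have hmono : ∀ᵐ t ∂volume.restrict (Icc 1 T),
      (minner m (φ' t) (φ t + z) + minner m (φ t + z) (φ' t)) * (6 * t)⁻¹
        + minner m (φ t + z) (φ t + z) * -(6 * t ^ 2)⁻¹
        + (accel m bm t * minner m bm z + speed m bm t * 0)
        ≤ parIntegrand m bm x φ φ' t := by
    rw [← restrict_Ioc_eq_restrict_Icc]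
    filter_upwards [ae_restrict_of_ae_restrict_of_subset Ioc_subset_Ioi_self hc,
      ae_restrict_mem measurableSet_Ioc] with t hct ht
    have ht0 : 0 < t := by linarith [ht.1]
    have hr : 0 < beta m bm * t ^ ((2 : ℝ) / 3) := by positivity
    have hU := hbm.div_mnorm_le_U hN hm (inX_parCurve hbm.1 hx (hX t ht.1.le)) hct
    have hk := kepler_lower_bound (u := U m bm) (q := minner m (φ t + z) (φ t + z))
      (c := minner m bm (φ t + z)) (U_nonneg hm bm) hr (mnorm_pos hN hm hct) (by
        have : parCurve m bm x φ t = (φ t + z) + (beta m bm * t ^ ((2 : ℝ) / 3)) • bm := by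
          simp only [parCurve, parR0, hz]; abel
        rw [mnorm_sq hm, this]
        generalize φ t + z = w
        simp only [minner_add_left, minner_add_right, minner_smul_left, minner_smul_right,
          hbm.2.2.1, minner_comm w bm]
        ring)
    have hUr : U m (parR0 m bm t) = U m bm / (beta m bm * t ^ ((2 : ℝ) / 3)) := by
      rw [parR0, U_smul hr.le]; ring
    have hq : U m bm / (2 * (beta m bm * t ^ ((2 : ℝ) / 3)) ^ 3) = 1 / (9 * t ^ 2) := by
      rw [radius_pow_three hm ht0]
      have := U_pos hN hm hbm.2.1
      field_simp
    rw [hq] at hk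
    have hsq := minner_self_nonneg hm (φ' t - (3 * t)⁻¹ • (φ t + z))
    have hlin : minner m bm (φ t + z) = minner m bm (φ t) + minner m bm z :=
      minner_add_right _ _ _
    simp only [minner_sub_left, minner_sub_right, minner_smul_left (_ : ℝ) (φ t + z),
      minner_smul_right (_ : ℝ) _ (φ t + z)] at hsq
    rw [minner_comm (φ t + z) (φ' t)] at hsq
    rw [parIntegrand, mnorm_sq hm, hUr, show minner m (parR0'' m bm t) (φ t) =
      accel m bm t * minner m bm (φ t) by rw [parR0'', minner_smul_left, accel],
      accel_eq hm hb ht0]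
    rw [minner_comm (φ t + z) (φ' t)]
    rw [hlin] at hk
    generalize minner m (φ t + z) (φ t + z) = Q at *
    generalize minner m (φ' t) (φ t + z) = R at *
    generalize minner m (φ' t) (φ' t) = S at *
    have e1 : (R + R) * (6 * t)⁻¹ + Q * -(6 * t ^ 2)⁻¹ =
        S / 2 - 1 / (9 * t ^ 2) * Q -
          (S - (3 * t)⁻¹ * R - (3 * t)⁻¹ * (R - (3 * t)⁻¹ * Q)) / 2 := by
      field_simp; ring
    rw [e1]
    linarith
  have hle := intervalIntegral.integral_mono_ae_restrict hT hH.1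
    ((intervalIntegrable_iff_integrableOn_Ioc_of_le hT).2 (hi.mono_set Ioc_subset_Ioi_self)) hmono
  refine le_trans ?_ hle
  rw [hH.integral_eq hT]
  beta_reduce
  rw [h0, zero_add]
  have hs1 : speed m bm 1 = beta m bm * (2 / 3) := by simp [speed]
  have hsT := speed_nonneg hb (show 0 < T by linarith)
  have hsT1 : speed m bm T ≤ beta m bm * (2 / 3) := by
    have := rpow_neg_add_le (s := 1 / 3) (t := 1) (h := T - 1) (by norm_num) one_pos (by linarith)
    rw [speed]
    simp only [Real.one_rpow, add_sub_cancel] at this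
    nlinarith
  have hzz := minner_self_nonneg hm z
  have hbz := two_mul_abs_minner_le hm bm z
  rw [hbm.2.2.1] at hbz
  have hQ : 0 ≤ minner m (φ T + z) (φ T + z) * (6 * T)⁻¹ := by
    have := minner_self_nonneg hm (φ T + z)
    have : 0 < T := by linarith
    positivity
  rw [hs1]
  have hab : |(speed m bm T - beta m bm * (2 / 3)) * minner m bm z| ≤
      beta m bm * (2 / 3) * |minner m bm z| := by
    rw [abs_mul]
    refine mul_le_mul_of_nonneg_right ?_ (abs_nonneg _)
    rw [abs_le]; constructor <;> linarith
  have := neg_abs_le ((speed m bm T - beta m bm * (2 / 3)) * minner m bm z)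
  nlinarith [mul_nonneg hb.le hzz, mul_le_mul_of_nonneg_left hbz hb.le]

end Action

section Transfer

variable {m : Fin N → ℝ} {bm x y : Conf d N} {φ φ' ψ ψ' : ℝ → Conf d N}

/-- The Lagrangian of the Newtonian `N`-body problem along a curve with given derivative. -/
def lagrangian (m : Fin N → ℝ) (γ γ' : ℝ → Conf d N) (t : ℝ) : ℝ :=
  minner m (γ' t) (γ' t) / 2 + U m (γ t)

/-- The derivative of `parCurve`. -/
def parVel (m : Fin N → ℝ) (bm : Conf d N) (φ' : ℝ → Conf d N) (t : ℝ) : Conf d N :=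
  φ' t + speed m bm t • bm

theorem lagrangian_parCurve (hN : 2 ≤ N) (hm : ∀ i, 0 < m i) (hbm : IsMinCentral m bm) {t : ℝ}
    (ht : 0 < t) : lagrangian m (parCurve m bm x φ) (parVel m bm φ') t =
      parIntegrand m bm x φ φ' t + ((accel m bm t * minner m bm (φ t)
        + speed m bm t * minner m bm (φ' t)) + speed m bm t ^ 2) := by
  rw [parIntegrand_eq hN hm hbm ht, lagrangian, parVel]
  simp only [minner_add_left, minner_add_right, minner_smul_left, minner_smul_right, hbm.2.2.1,
    minner_comm (φ' t) bm]
  ring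

theorem intervalIntegrable_speed_sq {a b : ℝ} (ha : 0 < a) (hab : a ≤ b) :
    IntervalIntegrable (fun t => speed m bm t ^ 2) volume a b :=
  ContinuousOn.intervalIntegrable (by
    rw [uIcc_of_le hab]
    exact (continuousOn_speed.mono (Icc_subset_Ioi_zero ha)).pow 2)

theorem intervalIntegrable_parIntegrand_iff (hN : 2 ≤ N) (hm : ∀ i, 0 < m i)
    (hbm : IsMinCentral m bm) (hφ : InD m 1 ⊤ φ φ') {T : ℝ} (hT : 1 ≤ T) :
    IntervalIntegrable (parIntegrand m bm x φ φ') volume 1 T ↔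
      IntervalIntegrable (lagrangian m (parCurve m bm x φ) (parVel m bm φ')) volume 1 T := by
  obtain ⟨-, -, hp, -⟩ := (inD_top_iff hm).1 hφ
  have hG := ((isPrim_speed (m := m) (bm := bm) one_pos hT).mul
    (isPrim_minner_left (m := m) (hp T hT) bm) hT).1.add
      (intervalIntegrable_speed_sq (m := m) (bm := bm) one_pos hT)
  constructor
  · intro h
    refine (h.add hG).congr fun t ht => ?_
    rw [uIoc_of_le hT] at ht
    exact (lagrangian_parCurve hN hm hbm (by linarith [ht.1])).symm
  · intro h
    refine (h.sub hG).congr fun t ht => ?_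
    rw [uIoc_of_le hT] at ht
    have := lagrangian_parCurve (x := x) (φ := φ) (φ' := φ') hN hm hbm
      (show 0 < t by linarith [ht.1])
    simp only [this]
    ring

theorem integral_parIntegrand (hN : 2 ≤ N) (hm : ∀ i, 0 < m i)
    (hbm : IsMinCentral m bm) (hφ : InD m 1 ⊤ φ φ') {T : ℝ} (hT : 1 ≤ T)
    (hi : IntervalIntegrable (parIntegrand m bm x φ φ') volume 1 T) :
    ∫ t in (1 : ℝ)..T, parIntegrand m bm x φ φ' t =
      (∫ t in (1 : ℝ)..T, lagrangian m (parCurve m bm x φ) (parVel m bm φ') t)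
        - speed m bm T * minner m bm (φ T) - ∫ t in (1 : ℝ)..T, speed m bm t ^ 2 := by
  obtain ⟨h0, -, hp, -⟩ := (inD_top_iff hm).1 hφ
  have hG := (isPrim_speed (m := m) (bm := bm) one_pos hT).mul
    (isPrim_minner_left (m := m) (hp T hT) bm) hT
  have hS := intervalIntegrable_speed_sq (m := m) (bm := bm) one_pos hT
  have hE : ∫ t in (1 : ℝ)..T, lagrangian m (parCurve m bm x φ) (parVel m bm φ') t =
      ∫ t in (1 : ℝ)..T, (parIntegrand m bm x φ φ' t + ((accel m bm t * minner m bm (φ t)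
        + speed m bm t * minner m bm (φ' t)) + speed m bm t ^ 2)) := by
    refine intervalIntegral.integral_congr fun t ht => ?_
    rw [uIcc_of_le hT] at ht
    exact lagrangian_parCurve hN hm hbm (by linarith [ht.1])
  rw [hE, intervalIntegral.integral_add hi (hG.1.add hS), intervalIntegral.integral_add hG.1 hS,
    hG.integral_eq hT, h0, show minner m bm 0 = 0 by simp [minner]]
  ring

theorem abs_minner_le_mul (hm : ∀ i, 0 < m i) (hbm : IsMinCentral m bm)
    (hφ : InD m 1 ⊤ φ φ') : ∃ C, 0 ≤ C ∧ ∀ t, 1 ≤ t → |minner m bm (φ t)| ≤ C * t := by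
  obtain ⟨h0, -, hp, h2⟩ := (inD_top_iff hm).1 hφ
  have hnn : 0 ≤ ∫ t in Ioi 1, minner m (φ' t) (φ' t) :=
    integral_nonneg fun t => minner_self_nonneg hm _
  refine ⟨1 + ∫ t in Ioi 1, minner m (φ' t) (φ' t), by linarith, fun t ht => ?_⟩
  have hL := isPrim_minner_left (m := m) (hp t ht) bm
  have h2t : IntervalIntegrable (fun t => minner m (φ' t) (φ' t)) volume 1 t :=
    (intervalIntegrable_iff_integrableOn_Ioc_of_le ht).2 (h2.mono_set Ioc_subset_Ioi_self)
  have e : minner m bm (φ t) = ∫ s in (1 : ℝ)..t, minner m bm (φ' s) := by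
    rw [hL.integral_eq ht, h0]; simp [minner]
  rw [e]
  have h1 : |∫ s in (1 : ℝ)..t, minner m bm (φ' s)| ≤
      ∫ s in (1 : ℝ)..t, (1 + minner m (φ' s) (φ' s)) := by
    rw [← Real.norm_eq_abs]
    refine intervalIntegral.norm_integral_le_of_norm_le ht (ae_of_all _ fun s _ => ?_)
      ((intervalIntegrable_const (c := (1 : ℝ))).add h2t)
    have := two_mul_abs_minner_le hm bm (φ' s)
    rw [hbm.2.2.1] at this
    have h3 := minner_self_nonneg hm (φ' s)
    rw [Real.norm_eq_abs]
    linarith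
  rw [intervalIntegral.integral_add intervalIntegrable_const h2t] at h1
  have h4 : ∫ s in (1 : ℝ)..t, minner m (φ' s) (φ' s) ≤ ∫ t in Ioi 1, minner m (φ' t) (φ' t) := by
    rw [intervalIntegral.integral_of_le ht]
    exact setIntegral_mono_set h2 (ae_of_all _ fun s => minner_self_nonneg hm _)
      (Ioc_subset_Ioi_self.eventuallyLE)
  simp only [intervalIntegral.integral_const, smul_eq_mul, mul_one] at h1
  nlinarith

theorem integrableOn_Ioi_comp_add_iff {F : ℝ → ℝ} (a h : ℝ) :
    IntegrableOn (fun t => F (t + h)) (Ioi a) ↔ IntegrableOn F (Ioi (a + h)) := by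
  have := (measurePreserving_add_right (volume : Measure ℝ) h).integrableOn_comp_preimage
    (measurableEmbedding_addRight h) (f := F) (s := Ioi (a + h))
  have hs : (fun t => t + h) ⁻¹' Ioi (a + h) = Ioi a := by ext t; simp
  rw [hs] at this
  exact this

theorem continuousOn_of_inD (hm : ∀ i, 0 < m i) (hφ : InD m 1 ⊤ φ φ') :
    ContinuousOn φ (Ioi 1) := by
  obtain ⟨-, -, hp, -⟩ := (inD_top_iff hm).1 hφ
  intro t ht
  have h1 : (1 : ℝ) < t := ht
  exact (((hp (t + 1) (by linarith)).continuousOn (by linarith)).continuousAt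
    (Icc_mem_nhds h1 (by linarith))).continuousWithinAt

/-- Two curves in `D₀^{1,2}(1,+∞)` describing the same motion up to the time shift `h`. -/
structure IsShift (m : Fin N → ℝ) (bm x y : Conf d N) (φ φ' ψ ψ' : ℝ → Conf d N) (h : ℝ) :
    Prop where
  nonneg : 0 ≤ h
  left : InD m 1 ⊤ φ φ'
  right : InD m 1 ⊤ ψ ψ'
  curve : ∀ t, 1 ≤ t → parCurve m bm y ψ t = parCurve m bm x φ (t + h)
  vel : ∀ t, 1 < t → parVel m bm ψ' t = parVel m bm φ' (t + h)

namespace IsShift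

variable {h : ℝ}

theorem minner_eq (hbm : IsMinCentral m bm) (hs : IsShift m bm x y φ φ' ψ ψ' h) {t : ℝ}
    (ht : 1 ≤ t) : minner m bm (ψ t) = minner m bm (φ (t + h)) +
      (beta m bm * (t + h) ^ ((2 : ℝ) / 3) - beta m bm * t ^ ((2 : ℝ) / 3)) +
      minner m bm (x - y) := by
  have h1 := hs.curve t ht
  have h2 : ψ t = φ (t + h) + parR0 m bm (t + h) - parR0 m bm t + (x - y) := by
    simp only [parCurve] at h1
    rw [sub_left_inj] at h1
    have : ψ t = (ψ t + parR0 m bm t + y) - parR0 m bm t - y := by abel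
    rw [this, h1]; abel
  rw [h2]
  simp only [minner_add_right, minner_sub_right, parR0, minner_smul_right, hbm.2.2.1]
  ring

theorem parIntegrand_sub (hN : 2 ≤ N) (hm : ∀ i, 0 < m i) (hbm : IsMinCentral m bm)
    (hs : IsShift m bm x y φ φ' ψ ψ' h) {t : ℝ} (ht : 1 ≤ t) :
    parIntegrand m bm y ψ ψ' t = parIntegrand m bm x φ φ' (t + h)
      + minner m (ψ' t) (ψ' t) / 2 - minner m (φ' (t + h)) (φ' (t + h)) / 2
      + ((speed m bm (t + h) ^ 2 - speed m bm t ^ 2) / 2 +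
        (accel m bm (t + h) * minner m bm (φ (t + h)) - accel m bm t * minner m bm (ψ t))) := by
  have := hs.nonneg
  rw [parIntegrand_eq hN hm hbm (by linarith), parIntegrand_eq hN hm hbm (by linarith),
    hs.curve t ht]
  ring

theorem integrableOn_error (hN : 2 ≤ N) (hm : ∀ i, 0 < m i) (hbm : IsMinCentral m bm)
    (hs : IsShift m bm x y φ φ' ψ ψ' h) :
    IntegrableOn (fun t => (speed m bm (t + h) ^ 2 - speed m bm t ^ 2) / 2 +
      (accel m bm (t + h) * minner m bm (φ (t + h)) - accel m bm t * minner m bm (ψ t)))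
      (Ioi 1) := by
  have hh := hs.nonneg
  have hb := beta_pos hN hm hbm
  obtain ⟨C, hC, hf⟩ := abs_minner_le_mul hm hbm hs.left
  set k := |minner m bm (x - y)|
  set K := beta m bm * (beta m bm * h) + beta m bm * h * (C * (1 + h)) +
    beta m bm * (beta m bm * h + k)
  have hdom : IntegrableOn (fun t : ℝ => K * t ^ (-(4 : ℝ) / 3)) (Ioi 1) :=
    (integrableOn_Ioi_rpow_of_lt (by norm_num) one_pos).const_mul K
  have hcφ : ContinuousOn (fun t => minner m bm (φ (t + h))) (Ioi 1) := by
    have := (minnerCLM m bm).continuous.comp_continuousOn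
      ((continuousOn_of_inD hm hs.left).comp (f := fun t : ℝ => t + h) (s := Ioi 1) (by fun_prop)
        fun t ht => by
          have : (1 : ℝ) < t := ht
          show 1 < t + h
          linarith)
    simpa only [Function.comp_def, minnerCLM_apply] using this
  have hcψ : ContinuousOn (fun t => minner m bm (ψ t)) (Ioi 1) := by
    simpa only [Function.comp_def, minnerCLM_apply] using
      (minnerCLM m bm).continuous.comp_continuousOn (continuousOn_of_inD hm hs.right)
  have hs1 := measurable_speed (m := m) (bm := bm)
  have hs2 := measurable_accel (m := m) (bm := bm)
  refine hdom.mono' ?_ ((ae_restrict_iff' measurableSet_Ioi).2 (ae_of_all _ fun t ht => ?_))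
  · refine AEStronglyMeasurable.add (by fun_prop) (AEStronglyMeasurable.sub ?_ ?_)
    · exact AEStronglyMeasurable.mul (hs2.comp (measurable_add_const h)).aestronglyMeasurable
        (hcφ.aestronglyMeasurable measurableSet_Ioi)
    · exact AEStronglyMeasurable.mul hs2.aestronglyMeasurable (hcψ.aestronglyMeasurable measurableSet_Ioi)
  · have ht1 : (1 : ℝ) < t := ht
    have ht0 : 0 < t := by linarith
    have hP : (0 : ℝ) ≤ t ^ (-(4 : ℝ) / 3) := by positivity
    have hsp : ∀ s : ℝ, 1 ≤ s → |speed m bm s| ≤ beta m bm := fun s h1 => by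
      have h2 : s ^ (-((1 : ℝ) / 3)) ≤ 1 :=
        Real.rpow_le_one_of_one_le_of_nonpos h1 (by norm_num)
      rw [abs_of_nonneg (speed_nonneg hb (by linarith)), speed]
      have : 0 ≤ s ^ (-((1 : ℝ) / 3)) := by positivity
      nlinarith
    have e1 : |(speed m bm (t + h) ^ 2 - speed m bm t ^ 2) / 2| ≤
        beta m bm * (beta m bm * h) * t ^ (-(4 : ℝ) / 3) := by
      have ha := abs_speed_sub_le (m := m) (bm := bm) hb ht0 hh
      have hbb : |(speed m bm (t + h) + speed m bm t) / 2| ≤ beta m bm := by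
        rw [abs_div, abs_two]
        have := abs_add_le (speed m bm (t + h)) (speed m bm t)
        linarith [hsp (t + h) (by linarith), hsp t (by linarith)]
      have : (speed m bm (t + h) ^ 2 - speed m bm t ^ 2) / 2 =
        (speed m bm (t + h) + speed m bm t) / 2 * (speed m bm (t + h) - speed m bm t) := by ring
      rw [this, abs_mul]
      refine (mul_le_mul hbb ha (abs_nonneg _) hb.le).trans_eq (by ring)
    have e2 : |(accel m bm (t + h) - accel m bm t) * minner m bm (φ (t + h))| ≤
        beta m bm * h * (C * (1 + h)) * t ^ (-(4 : ℝ) / 3) := by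
      have ha := abs_accel_sub_le (m := m) (bm := bm) hb ht0 hh
      have hfb : |minner m bm (φ (t + h))| ≤ C * (1 + h) * t := by
        refine (hf (t + h) (by linarith)).trans ?_
        have : t + h ≤ (1 + h) * t := by nlinarith
        nlinarith [mul_le_mul_of_nonneg_left this hC]
      rw [abs_mul]
      have hp : t ^ (-(4 : ℝ) / 3) = t ^ (-(7 : ℝ) / 3) * t := by
        rw [← Real.rpow_add_one ht0.ne']; norm_num
      refine (mul_le_mul ha hfb (abs_nonneg _) (by positivity)).trans_eq ?_
      rw [hp]; ring
    have e3 : |accel m bm t * ((beta m bm * (t + h) ^ ((2 : ℝ) / 3) -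
        beta m bm * t ^ ((2 : ℝ) / 3)) + minner m bm (x - y))| ≤
        beta m bm * (beta m bm * h + k) * t ^ (-(4 : ℝ) / 3) := by
      have ha : |accel m bm t| ≤ beta m bm * t ^ (-(4 : ℝ) / 3) := by
        rw [accel, abs_mul, abs_mul, abs_of_pos hb, abs_of_nonneg hP]
        norm_num [abs_div]
        nlinarith [mul_nonneg hb.le hP]
      have hr := abs_radius_sub_le (m := m) (bm := bm) hb ht1.le hh
      rw [abs_mul]
      refine (mul_le_mul ha ((abs_add_le _ _).trans (add_le_add_left hr k)) (abs_nonneg _)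
        (by positivity)).trans_eq (by ring)
    have e4 : accel m bm (t + h) * minner m bm (φ (t + h)) - accel m bm t * minner m bm (ψ t) =
        (accel m bm (t + h) - accel m bm t) * minner m bm (φ (t + h)) -
        accel m bm t * ((beta m bm * (t + h) ^ ((2 : ℝ) / 3) -
        beta m bm * t ^ ((2 : ℝ) / 3)) + minner m bm (x - y)) := by
      rw [hs.minner_eq hbm ht1.le]; ring
    rw [e4, Real.norm_eq_abs]
    refine (abs_add_le _ _).trans ((add_le_add e1 ((abs_sub _ _).trans (add_le_add e2 e3))).trans_eq
      ?_)
    ring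

theorem integrableOn_iff (hN : 2 ≤ N) (hm : ∀ i, 0 < m i) (hbm : IsMinCentral m bm)
    (hs : IsShift m bm x y φ φ' ψ ψ' h) :
    IntegrableOn (parIntegrand m bm x φ φ') (Ioi (1 + h)) ↔
      IntegrableOn (parIntegrand m bm y ψ ψ') (Ioi 1) := by
  have hh := hs.nonneg
  have hE := hs.integrableOn_error hN hm hbm
  have hψ := ((inD_top_iff hm).1 hs.right).2.2.2.div_const 2
  have hφ : IntegrableOn (fun t => minner m (φ' (t + h)) (φ' (t + h)) / 2) (Ioi 1) :=
    ((integrableOn_Ioi_comp_add_iff (F := fun t => minner m (φ' t) (φ' t)) 1 h).2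
      (((inD_top_iff hm).1 hs.left).2.2.2.mono_set
        (Ioi_subset_Ioi (by linarith)))).div_const 2
  rw [← integrableOn_Ioi_comp_add_iff]
  constructor
  · intro hi
    refine (((hi.add hψ).sub hφ).add hE).congr_fun (fun t ht => ?_) measurableSet_Ioi
    exact (hs.parIntegrand_sub hN hm hbm (le_of_lt ht)).symm
  · intro hi
    refine (((hi.sub hψ).add hφ).sub hE).congr_fun (fun t ht => ?_) measurableSet_Ioi
    have := hs.parIntegrand_sub hN hm hbm (le_of_lt ht)
    simp only [Pi.add_apply, Pi.sub_apply]
    rw [this]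
    ring

/-- The renormalized actions of a motion and of its time shift differ by the Lagrangian action of
the initial piece. -/
theorem integral_eq (hN : 2 ≤ N) (hm : ∀ i, 0 < m i) (hbm : IsMinCentral m bm)
    (hs : IsShift m bm x y φ φ' ψ ψ' h) (hi : IntegrableOn (parIntegrand m bm x φ φ') (Ioi 1)) :
    ∫ t in Ioi 1, parIntegrand m bm x φ φ' t =
      (∫ t in (1 : ℝ)..(1 + h), lagrangian m (parCurve m bm x φ) (parVel m bm φ') t) +
        ∫ t in Ioi 1, parIntegrand m bm y ψ ψ' t := by
  have hh := hs.nonneg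
  have hb := beta_pos hN hm hbm
  obtain ⟨C, hC, hf⟩ := abs_minner_le_mul hm hbm hs.left
  have hi' : IntegrableOn (parIntegrand m bm y ψ ψ') (Ioi 1) :=
    (hs.integrableOn_iff hN hm hbm).1 (hi.mono_set (Ioi_subset_Ioi (by linarith)))
  have hint : ∀ T, 1 ≤ T → IntervalIntegrable (parIntegrand m bm x φ φ') volume 1 T := fun T hT =>
    (intervalIntegrable_iff_integrableOn_Ioc_of_le hT).2 (hi.mono_set Ioc_subset_Ioi_self)
  have hint' : ∀ T, 1 ≤ T → IntervalIntegrable (parIntegrand m bm y ψ ψ') volume 1 T :=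
    fun T hT =>
      (intervalIntegrable_iff_integrableOn_Ioc_of_le hT).2 (hi'.mono_set Ioc_subset_Ioi_self)
  have hl : ∀ T, 1 ≤ T → IntervalIntegrable
      (lagrangian m (parCurve m bm x φ) (parVel m bm φ')) volume 1 T := fun T hT =>
    (intervalIntegrable_parIntegrand_iff hN hm hbm hs.left hT).1 (hint T hT)
  have L1 := intervalIntegral_tendsto_integral_Ioi 1 hi (tendsto_atTop_add_const_right _ h tendsto_id)
  have L2 := intervalIntegral_tendsto_integral_Ioi 1 hi' tendsto_id
  simp only [id] at L1 L2
  set R : ℝ → ℝ := fun T => speed m bm T * minner m bm (ψ T)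
    - speed m bm (T + h) * minner m bm (φ (T + h)) - ∫ t in T..(T + h), speed m bm t ^ 2 with hR
  have hRdom : ∀ T, 1 ≤ T → ‖R T‖ ≤ beta m bm * h * (C * (1 + h)) * T ^ (-((1 : ℝ) / 3))
      + speed m bm T * (beta m bm * h + |minner m bm (x - y)|) + speed m bm T ^ 2 * h := by
    intro T hT
    have hT0 : 0 < T := by linarith
    have e1 : |(speed m bm (T + h) - speed m bm T) * minner m bm (φ (T + h))| ≤
        beta m bm * h * (C * (1 + h)) * T ^ (-((1 : ℝ) / 3)) := by
      have hfb : |minner m bm (φ (T + h))| ≤ C * (1 + h) * T := by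
        refine (hf (T + h) (by linarith)).trans ?_
        have : T + h ≤ (1 + h) * T := by nlinarith
        nlinarith [mul_le_mul_of_nonneg_left this hC]
      have hp : T ^ (-((1 : ℝ) / 3)) = T ^ (-(4 : ℝ) / 3) * T := by
        rw [← Real.rpow_add_one hT0.ne']; norm_num
      rw [abs_mul, hp]
      exact (mul_le_mul (abs_speed_sub_le hb hT0 hh) hfb (abs_nonneg _)
        (by positivity)).trans_eq (by ring)
    have e2 : |speed m bm T * ((beta m bm * (T + h) ^ ((2 : ℝ) / 3) -
        beta m bm * T ^ ((2 : ℝ) / 3)) + minner m bm (x - y))| ≤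
        speed m bm T * (beta m bm * h + |minner m bm (x - y)|) := by
      rw [abs_mul, abs_of_nonneg (speed_nonneg hb hT0)]
      exact mul_le_mul_of_nonneg_left ((abs_add_le _ _).trans
        (by linarith [abs_radius_sub_le (m := m) (bm := bm) hb hT hh])) (speed_nonneg hb hT0)
    have e3 : |∫ t in T..(T + h), speed m bm t ^ 2| ≤ speed m bm T ^ 2 * h := by
      have := intervalIntegral.norm_integral_le_of_norm_le_const (a := T) (b := T + h)
        (f := fun t => speed m bm t ^ 2) (C := speed m bm T ^ 2) (fun s hs' => by
          rw [uIoc_of_le (by linarith)] at hs'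
          have h1 : 0 < s := by linarith [hs'.1]
          have h2 := rpow_neg_add_le (s := 1 / 3) (t := T) (h := s - T) (by norm_num) hT0
            (by linarith [hs'.1])
          rw [add_sub_cancel] at h2
          rw [Real.norm_of_nonneg (sq_nonneg _)]
          refine pow_le_pow_left₀ (speed_nonneg hb h1) ?_ 2
          exact mul_le_mul_of_nonneg_left h2 (by positivity))
      rwa [add_sub_cancel_left, abs_of_nonneg hh] at this
    have e4 : R T = -((speed m bm (T + h) - speed m bm T) * minner m bm (φ (T + h))) +
        speed m bm T * ((beta m bm * (T + h) ^ ((2 : ℝ) / 3) -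
        beta m bm * T ^ ((2 : ℝ) / 3)) + minner m bm (x - y)) -
        ∫ t in T..(T + h), speed m bm t ^ 2 := by
      rw [hR]
      beta_reduce
      rw [hs.minner_eq hbm hT]; ring
    rw [e4, Real.norm_eq_abs]
    refine (abs_sub _ _).trans (add_le_add ((abs_add_le _ _).trans (add_le_add ?_ e2)) e3)
    rwa [abs_neg]
  have hR0 : Tendsto R atTop (𝓝 0) := by
    refine squeeze_zero_norm' (eventually_atTop.2 ⟨1, hRdom⟩) ?_
    have t1 := (tendsto_rpow_neg_atTop (show (0 : ℝ) < 1 / 3 by norm_num)).const_mul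
      (beta m bm * h * (C * (1 + h)))
    have t2 := (tendsto_speed (m := m) (bm := bm)).mul_const
      (beta m bm * h + |minner m bm (x - y)|)
    have t3 := ((tendsto_speed (m := m) (bm := bm)).pow 2).mul_const h
    simpa using (t1.add t2).add t3
  have L3 := (L2.const_add (∫ t in (1 : ℝ)..(1 + h),
    lagrangian m (parCurve m bm x φ) (parVel m bm φ') t)).add hR0
  rw [add_zero] at L3
  refine tendsto_nhds_unique_of_eventuallyEq L1 L3 ?_
  filter_upwards [eventually_ge_atTop 1] with T hT
  have hTh : 1 ≤ T + h := by linarith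
  rw [integral_parIntegrand hN hm hbm hs.left hTh (hint _ hTh),
    integral_parIntegrand hN hm hbm hs.right hT (hint' _ hT)]
  have hshift : ∫ t in (1 : ℝ)..T, lagrangian m (parCurve m bm y ψ) (parVel m bm ψ') t =
      ∫ t in (1 + h)..(T + h), lagrangian m (parCurve m bm x φ) (parVel m bm φ') t := by
    rw [← intervalIntegral.integral_comp_add_right]
    refine intervalIntegral.integral_congr_ae (ae_of_all _ fun t ht => ?_)
    rw [uIoc_of_le hT] at ht
    rw [lagrangian, lagrangian, hs.curve t ht.1.le, hs.vel t ht.1]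
  have hadd := intervalIntegral.integral_add_adjacent_intervals (hl (1 + h) (by linarith))
    ((hl (1 + h) (by linarith)).symm.trans (hl (T + h) hTh))
  have hadd' := intervalIntegral.integral_add_adjacent_intervals
    (intervalIntegrable_speed_sq (m := m) (bm := bm) one_pos hT)
    (intervalIntegrable_speed_sq (m := m) (bm := bm) (show 0 < T by linarith)
      (show T ≤ T + h by linarith))
  rw [hshift, ← hadd, ← hadd', hR]
  ring

end IsShift

end Transfer

section DynamicProgramming

variable {m : Fin N → ℝ} {bm x y : Conf d N} {φ φ' ψ ψ' c c' : ℝ → Conf d N} {h : ℝ}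

/-- Competitors in the definition of the value function with finite renormalized action. -/
structure Admissible (m : Fin N → ℝ) (bm x : Conf d N) (φ φ' : ℝ → Conf d N) : Prop where
  inD : InD m 1 ⊤ φ φ'
  integrableOn : IntegrableOn (parIntegrand m bm x φ φ') (Ioi 1)
  ae_not_collision : ∀ᵐ t ∂volume.restrict (Ioi 1), ¬ collision (parCurve m bm x φ t)

theorem Admissible.parInf_le (h : Admissible m bm x φ φ') :
    parInf m bm x ⊤ ≤ ((∫ t in Ioi 1, parIntegrand m bm x φ φ' t : ℝ) : EReal) := by
  refine (iInf_le _ φ).trans ((iInf_le _ φ').trans ((iInf_le _ h.inD).trans ?_))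
  rw [parAction, timeSet_top, if_pos ⟨h.integrableOn, h.ae_not_collision⟩]

theorem exists_admissible_of_parInf_lt {r : ℝ} (h : parInf m bm x ⊤ < r) :
    ∃ φ φ', Admissible m bm x φ φ' ∧ ∫ t in Ioi 1, parIntegrand m bm x φ φ' t < r := by
  simp only [parInf, iInf_lt_iff] at h
  obtain ⟨φ, φ', hD, hlt⟩ := h
  rw [parAction, timeSet_top] at hlt
  split_ifs at hlt with hc
  · exact ⟨φ, φ', ⟨hD, hc.1, hc.2⟩, EReal.coe_lt_coe_iff.1 hlt⟩
  · exact absurd hlt (not_lt.2 le_top)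

theorem le_parInf (hN : 2 ≤ N) (hm : ∀ i, 0 < m i) (hbm : IsMinCentral m bm) (hx : inX m x) :
    ((-((1 + beta m bm) * (1 + minner m (x - beta m bm • bm) (x - beta m bm • bm))) : ℝ) : EReal)
      ≤ parInf m bm x ⊤ := by
  by_contra! hlt
  obtain ⟨φ, φ', h1, h2⟩ := exists_admissible_of_parInf_lt hlt
  exact absurd (le_integral_parIntegrand hN hm hbm hx h1.inD h1.integrableOn h1.ae_not_collision)
    (not_le.2 h2)

theorem Admissible.coe_parValue (hN : 2 ≤ N) (hm : ∀ i, 0 < m i) (hbm : IsMinCentral m bm)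
    (hx : inX m x) (h : Admissible m bm x φ φ') : (parValue m bm x : EReal) = parInf m bm x ⊤ :=
  EReal.coe_toReal (h.parInf_le.trans_lt (EReal.coe_lt_top _)).ne
    ((EReal.bot_lt_coe _).trans_le (le_parInf hN hm hbm hx)).ne'

theorem Admissible.parValue_le (hN : 2 ≤ N) (hm : ∀ i, 0 < m i) (hbm : IsMinCentral m bm)
    (hx : inX m x) (h : Admissible m bm x φ φ') :
    parValue m bm x ≤ ∫ t in Ioi 1, parIntegrand m bm x φ φ' t := by
  rw [← EReal.coe_le_coe_iff, h.coe_parValue hN hm hbm hx]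
  exact h.parInf_le

theorem Admissible.le_parValue (hN : 2 ≤ N) (hm : ∀ i, 0 < m i) (hbm : IsMinCentral m bm)
    (hx : inX m x) (h : Admissible m bm x φ φ') :
    -((1 + beta m bm) * (1 + minner m (x - beta m bm • bm) (x - beta m bm • bm))) ≤
      parValue m bm x := by
  rw [← EReal.coe_le_coe_iff, h.coe_parValue hN hm hbm hx]
  exact le_parInf hN hm hbm hx

theorem Admissible.exists_lt (hN : 2 ≤ N) (hm : ∀ i, 0 < m i) (hbm : IsMinCentral m bm)
    (hx : inX m x) (h : Admissible m bm x φ φ') {ε : ℝ} (hε : 0 < ε) :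
    ∃ ψ ψ', Admissible m bm x ψ ψ' ∧
      ∫ t in Ioi 1, parIntegrand m bm x ψ ψ' t < parValue m bm x + ε := by
  refine exists_admissible_of_parInf_lt ?_
  rw [← h.coe_parValue hN hm hbm hx, EReal.coe_lt_coe_iff]
  linarith

theorem integrableOn_minner_add_smul (hm : ∀ i, 0 < m i) (hbm : IsMinCentral m bm) {S : Set ℝ}
    {g : ℝ → Conf d N} {η : ℝ → ℝ} (hg : AEStronglyMeasurable g (volume.restrict S))
    (hg2 : IntegrableOn (fun t => minner m (g t) (g t)) S)
    (hη : AEStronglyMeasurable η (volume.restrict S)) (hη2 : IntegrableOn (fun t => η t ^ 2) S) :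
    IntegrableOn (fun t => minner m (g t + η t • bm) (g t + η t • bm)) S := by
  refine ((hg2.const_mul 2).add (hη2.const_mul 2)).mono' ?_ (ae_of_all _ fun t => ?_)
  · exact (continuous_minner_self (m := m)).comp_aestronglyMeasurable
      (hg.add (hη.smul aestronglyMeasurable_const))
  · have h1 := minner_self_nonneg hm (g t - η t • bm)
    rw [Real.norm_of_nonneg (minner_self_nonneg hm _), Pi.add_apply]
    simp only [minner_add_left, minner_add_right, minner_sub_left, minner_sub_right,
      minner_smul_left, minner_smul_right, hbm.2.2.1] at h1 ⊢
    nlinarith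

theorem aestronglyMeasurable_Ioi_of_isPrim {a : ℝ} (hp : ∀ t, a ≤ t → IsPrim φ φ' a t) :
    AEStronglyMeasurable φ' (volume.restrict (Ioi a)) := by
  have : Ioi a = ⋃ n : ℕ, Ioc a (a + n) := by
    ext t
    simp only [mem_Ioi, mem_iUnion, mem_Ioc]
    constructor
    · intro ht
      obtain ⟨n, hn⟩ := exists_nat_ge (t - a)
      exact ⟨n, ht, by linarith⟩
    · rintro ⟨n, h1, -⟩; exact h1
  rw [this, aestronglyMeasurable_iUnion_iff]
  intro n
  have hn : a ≤ a + n := by linarith [Nat.cast_nonneg (α := ℝ) n]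
  exact ((intervalIntegrable_iff_integrableOn_Ioc_of_le hn).1 (hp _ hn).1).aestronglyMeasurable

theorem integrableOn_speed_sub_sq (hb : 0 < beta m bm) (hh : 0 ≤ h) :
    IntegrableOn (fun t => (speed m bm (t + h) - speed m bm t) ^ 2) (Ioi 1) := by
  have hs := measurable_speed (m := m) (bm := bm)
  have hdom : IntegrableOn (fun t : ℝ => (beta m bm * h) ^ 2 * t ^ (-(8 : ℝ) / 3)) (Ioi 1) :=
    (integrableOn_Ioi_rpow_of_lt (by norm_num) one_pos).const_mul _
  refine hdom.mono' (((hs.comp (measurable_add_const h)).sub hs).pow_const 2).aestronglyMeasurable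
    ((ae_restrict_iff' measurableSet_Ioi).2 (ae_of_all _ fun t ht => ?_))
  have ht0 : (0 : ℝ) < t := lt_trans one_pos ht
  have h1 := pow_le_pow_left₀ (abs_nonneg _) (abs_speed_sub_le (m := m) (bm := bm) hb ht0 hh) 2
  rw [Real.norm_of_nonneg (sq_nonneg _), ← sq_abs]
  refine h1.trans_eq ?_
  rw [mul_pow, ← Real.rpow_natCast (t ^ (-(4 : ℝ) / 3)), ← Real.rpow_mul ht0.le]
  norm_num

theorem ae_Ioi_comp_add {p : ℝ → Prop} {a : ℝ} (h : ℝ)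
    (hp : ∀ᵐ t ∂volume.restrict (Ioi (a + h)), p t) :
    ∀ᵐ t ∂volume.restrict (Ioi a), p (t + h) := by
  rw [ae_restrict_iff' measurableSet_Ioi] at hp ⊢
  filter_upwards [(measurePreserving_add_right (volume : Measure ℝ) h).quasiMeasurePreserving.ae hp]
    with t ht hta
  exact ht (by simpa using hta)

/-- The tail of an admissible curve is admissible. -/
theorem Admissible.exists_tail (hN : 2 ≤ N) (hm : ∀ i, 0 < m i) (hbm : IsMinCentral m bm)
    (hx : inX m x) (hh : 0 ≤ h) (hφ : Admissible m bm x φ φ') :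
    ∃ ψ ψ', Admissible m bm (parCurve m bm x φ (1 + h)) ψ ψ' ∧
      ∫ t in Ioi 1, parIntegrand m bm x φ φ' t =
        (∫ t in (1 : ℝ)..(1 + h), lagrangian m (parCurve m bm x φ) (parVel m bm φ') t) +
          ∫ t in Ioi 1, parIntegrand m bm (parCurve m bm x φ (1 + h)) ψ ψ' t := by
  obtain ⟨h0, hX, hp, h2⟩ := (inD_top_iff hm).1 hφ.inD
  have hb := beta_pos hN hm hbm
  set y := parCurve m bm x φ (1 + h) with hy
  have hyX : inX m y := inX_parCurve hbm.1 hx (hX _ (by linarith))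
  set ψ : ℝ → Conf d N := fun t => parCurve m bm x φ (t + h) - parR0 m bm t - y + beta m bm • bm
    with hψ
  set ψ' : ℝ → Conf d N := fun t => φ' (t + h) + (speed m bm (t + h) - speed m bm t) • bm with hψ'
  have hpφ : ∀ t, 1 ≤ t → IsPrim (fun s => φ (s + h)) (fun s => φ' (s + h)) 1 t := fun t ht => by
    have := ((hp (t + h) (by linarith)).mono (show 1 ≤ 1 + h by linarith)
      (show 1 + h ≤ t + h by linarith) le_rfl).comp_add_right h
    simpa using this
  have hD : InD m 1 ⊤ ψ ψ' := by
    refine (inD_top_iff hm).2 ⟨?_, fun t ht => ?_, fun t ht => ?_, ?_⟩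
    · simp [hψ, hy, parR0_one]
    · exact inX_add (inX_sub (inX_sub (inX_parCurve hbm.1 hx (hX _ (by linarith)))
        (inX_smul _ hbm.1)) hyX) (inX_smul _ hbm.1)
    · have h3 := ((isPrim_parCurve (m := m) (bm := bm) (x := x) (by linarith)
        (hp (t + h) (by linarith))).mono (show 1 ≤ 1 + h by linarith)
        (show 1 + h ≤ t + h by linarith) le_rfl).comp_add_right h
      rw [add_sub_cancel_right, add_sub_cancel_right] at h3
      have h4 := (isPrim_parR0 (m := m) (bm := bm) one_pos ht).clm
        (-ContinuousLinearMap.id ℝ (Conf d N))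
      refine ((h3.add h4).add (IsPrim.const (-y + beta m bm • bm))).congr
        (fun s _ => ?_) (fun s _ => ?_) ht
      · simp only [hψ, neg_apply, ContinuousLinearMap.id_apply]; abel
      · simp only [hψ', neg_apply, ContinuousLinearMap.id_apply, sub_smul]; abel
    · have hs := measurable_speed (m := m) (bm := bm)
      refine integrableOn_minner_add_smul hm hbm (aestronglyMeasurable_Ioi_of_isPrim hpφ)
        ((integrableOn_Ioi_comp_add_iff (F := fun t => minner m (φ' t) (φ' t)) 1 h).2
          (h2.mono_set (Ioi_subset_Ioi (by linarith)))) ?_ (integrableOn_speed_sub_sq hb hh)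
      exact ((hs.comp (measurable_add_const h)).sub hs).aestronglyMeasurable
  have hcurve : ∀ t, parCurve m bm y ψ t = parCurve m bm x φ (t + h) := fun t => by
    simp only [parCurve, hψ]; abel
  have hS : IsShift m bm x y φ φ' ψ ψ' h := ⟨hh, hφ.inD, hD, fun t _ => hcurve t, fun t _ => by
    simp only [parVel, hψ', sub_smul]; abel⟩
  refine ⟨ψ, ψ', ⟨hD, (hS.integrableOn_iff hN hm hbm).1
    (hφ.integrableOn.mono_set (Ioi_subset_Ioi (by linarith))), ?_⟩,
    hS.integral_eq hN hm hbm hφ.integrableOn⟩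
  simp only [hcurve]
  exact ae_Ioi_comp_add h (ae_restrict_of_ae_restrict_of_subset
    (Ioi_subset_Ioi (by linarith)) hφ.ae_not_collision)

/-- Arcs of finite Lagrangian action joining `x` to `y` in time `h`. -/
structure IsArc (m : Fin N → ℝ) (x y : Conf d N) (c c' : ℝ → Conf d N) (h : ℝ) : Prop where
  nonneg : 0 ≤ h
  prim : IsPrim c c' 1 (1 + h)
  start : c 1 = x
  finish : c (1 + h) = y
  mem : ∀ t ∈ Icc 1 (1 + h), inX m (c t)
  kinetic : IntervalIntegrable (fun t => minner m (c' t) (c' t)) volume 1 (1 + h)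
  potential : IntervalIntegrable (fun t => U m (c t)) volume 1 (1 + h)
  ae_not_collision : ∀ᵐ t ∂volume.restrict (Ioc 1 (1 + h)), ¬ collision (c t)

theorem IsArc.inX_finish (hc : IsArc m x y c c' h) : inX m y := by
  have := hc.nonneg
  exact hc.finish ▸ hc.mem _ ⟨by linarith, le_rfl⟩

theorem IsArc.inX_start (hc : IsArc m x y c c' h) : inX m x := by
  have := hc.nonneg
  exact hc.start ▸ hc.mem _ ⟨le_rfl, by linarith⟩

/-- An arc followed by an admissible curve is admissible. -/
theorem IsArc.exists_admissible (hN : 2 ≤ N) (hm : ∀ i, 0 < m i) (hbm : IsMinCentral m bm)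
    (hc : IsArc m x y c c' h) (hψ : Admissible m bm y ψ ψ') :
    ∃ φ φ', Admissible m bm x φ φ' ∧
      ∫ t in Ioi 1, parIntegrand m bm x φ φ' t =
        (∫ t in (1 : ℝ)..(1 + h), lagrangian m c c' t) +
          ∫ t in Ioi 1, parIntegrand m bm y ψ ψ' t := by
  have hh := hc.nonneg
  have h1h : 1 ≤ 1 + h := by linarith
  obtain ⟨h0, hX, hp, h2⟩ := (inD_top_iff hm).1 hψ.inD
  have hb := beta_pos hN hm hbm
  have hs := measurable_speed (m := m) (bm := bm)
  set γ : ℝ → Conf d N := fun t => if t ≤ 1 + h then c t else parCurve m bm y ψ (t - h) with hγ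
  set φ : ℝ → Conf d N := fun t => γ t - parR0 m bm t - x + beta m bm • bm with hφ
  set φ' : ℝ → Conf d N := fun t =>
    (if t ≤ 1 + h then c' t else parVel m bm ψ' (t - h)) - speed m bm t • bm with hφ'
  have hγ1 : ∀ t, t ≤ 1 + h → γ t = c t := fun t ht => if_pos ht
  have hγ2 : ∀ t, 1 ≤ t → γ (t + h) = parCurve m bm y ψ t := fun t ht => by
    rcases ht.eq_or_lt with rfl | ht
    · rw [hγ1 _ le_rfl, hc.finish, parCurve_one h0]
    · simp only [hγ]
      rw [if_neg (by linarith), add_sub_cancel_right]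
  have hv1 : ∀ t, t ≤ 1 + h → φ' t = c' t + (-speed m bm t) • bm := fun t ht => by
    simp only [hφ']
    rw [if_pos ht, neg_smul, sub_eq_add_neg]
  have hv2 : ∀ t, 1 < t → φ' (t + h) = ψ' t + (-(speed m bm (t + h) - speed m bm t)) • bm :=
    fun t ht => by
      simp only [hφ', parVel]
      rw [if_neg (by linarith), add_sub_cancel_right, neg_sub, sub_smul]; abel
  have hcurve : ∀ t, parCurve m bm x φ t = γ t := fun t => by
    simp only [parCurve, hφ]; abel
  have hvel : ∀ t, parVel m bm φ' t = if t ≤ 1 + h then c' t else parVel m bm ψ' (t - h) :=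
    fun t => by simp only [parVel, hφ']; abel
  have hγp1 : IsPrim γ (parVel m bm φ') 1 (1 + h) :=
    hc.prim.congr (fun t ht => hγ1 t ht.2) (fun t ht => by rw [hvel, if_pos ht.2]) h1h
  have hγp2 : ∀ t, 1 + h ≤ t → IsPrim γ (parVel m bm φ') (1 + h) t := fun t ht => by
    have h3 := (isPrim_parCurve (m := m) (bm := bm) (x := y) (by linarith)
      (hp (t - h) (by linarith))).comp_add_right (-h)
    rw [sub_neg_eq_add, sub_neg_eq_add, sub_add_cancel] at h3
    refine h3.congr (fun s hs => ?_) (fun s hs => ?_) ht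
    · have := hγ2 (s - h) (by linarith [hs.1])
      rw [sub_add_cancel] at this
      exact this
    · rw [hvel, if_neg (by linarith [hs.1])]; rfl
  have hγp : ∀ t, 1 ≤ t → IsPrim γ (parVel m bm φ') 1 t := fun t ht => by
    rcases le_total t (1 + h) with h' | h'
    · exact hγp1.mono le_rfl ht h'
    · exact hγp1.trans (hγp2 t h') h1h
  have hD : InD m 1 ⊤ φ φ' := by
    refine (inD_top_iff hm).2 ⟨?_, fun t ht => ?_, fun t ht => ?_, ?_⟩
    · simp only [hφ]
      rw [hγ1 _ h1h, hc.start, parR0_one]; abel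
    · refine inX_add (inX_sub (inX_sub ?_ (inX_smul _ hbm.1)) hc.inX_start) (inX_smul _ hbm.1)
      rcases le_total t (1 + h) with h' | h'
      · rw [hγ1 t h']; exact hc.mem t ⟨ht, h'⟩
      · have := hγ2 (t - h) (by linarith)
        rw [sub_add_cancel] at this
        rw [this]
        exact inX_parCurve hbm.1 hc.inX_finish (hX _ (by linarith))
    · have h4 := (isPrim_parR0 (m := m) (bm := bm) one_pos ht).clm
        (-ContinuousLinearMap.id ℝ (Conf d N))
      refine (((hγp t ht).add h4).add (IsPrim.const (-x + beta m bm • bm))).congr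
        (fun s _ => ?_) (fun s _ => ?_) ht
      · simp only [hφ, neg_apply, ContinuousLinearMap.id_apply]; abel
      · simp only [parVel, neg_apply, ContinuousLinearMap.id_apply]; abel
    · rw [← Ioc_union_Ioi_eq_Ioi h1h]
      refine IntegrableOn.union ?_ ?_
      · have := integrableOn_minner_add_smul hm hbm (S := Ioc 1 (1 + h)) (g := c')
          (η := fun t => -speed m bm t)
          ((intervalIntegrable_iff_integrableOn_Ioc_of_le h1h).1 hc.prim.1).aestronglyMeasurable
          ((intervalIntegrable_iff_integrableOn_Ioc_of_le h1h).1 hc.kinetic)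
          hs.neg.aestronglyMeasurable (by
            simp only [neg_sq]
            exact (intervalIntegrable_iff_integrableOn_Ioc_of_le h1h).1
              (intervalIntegrable_speed_sq one_pos h1h))
        exact this.congr_fun (fun t ht => by rw [hv1 t ht.2]) measurableSet_Ioc
      · rw [← integrableOn_Ioi_comp_add_iff]
        have := integrableOn_minner_add_smul hm hbm (S := Ioi 1) (g := ψ')
          (η := fun t => -(speed m bm (t + h) - speed m bm t))
          (aestronglyMeasurable_Ioi_of_isPrim hp) h2
          ((hs.comp (measurable_add_const h)).sub hs).neg.aestronglyMeasurable (by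
            simp only [neg_sq]
            exact integrableOn_speed_sub_sq hb hh)
        exact this.congr_fun (fun t ht => by rw [hv2 t ht]) measurableSet_Ioi
  have hS : IsShift m bm x y φ φ' ψ ψ' h := ⟨hh, hD, hψ.inD, fun t ht => by
    rw [hcurve, hγ2 t ht], fun t ht => by
      rw [hvel, if_neg (by linarith), add_sub_cancel_right]⟩
  have hlag : ∀ t ∈ Ioc 1 (1 + h),
      lagrangian m (parCurve m bm x φ) (parVel m bm φ') t = lagrangian m c c' t := fun t ht => by
    rw [lagrangian, lagrangian, hcurve, hvel, if_pos ht.2, hγ1 t ht.2]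
  have hi : IntegrableOn (parIntegrand m bm x φ φ') (Ioi 1) := by
    rw [← Ioc_union_Ioi_eq_Ioi h1h]
    refine IntegrableOn.union ?_ ((hS.integrableOn_iff hN hm hbm).2 hψ.integrableOn)
    rw [← intervalIntegrable_iff_integrableOn_Ioc_of_le h1h,
      intervalIntegrable_parIntegrand_iff hN hm hbm hD h1h]
    refine ((hc.kinetic.div_const 2).add hc.potential).congr fun t ht => ?_
    rw [uIoc_of_le h1h] at ht
    rw [hlag t ht]; rfl
  refine ⟨φ, φ', ⟨hD, hi, ?_⟩, ?_⟩
  · simp only [hcurve]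
    rw [← Ioc_union_Ioi_eq_Ioi h1h, ae_restrict_union_iff]
    constructor
    · filter_upwards [hc.ae_not_collision, ae_restrict_mem measurableSet_Ioc] with t h3 h4
      rwa [hγ1 t h4.2]
    · have h3 := ae_Ioi_comp_add (a := 1 + h) (p := fun t => ¬ collision (parCurve m bm y ψ t)) (-h)
        (by rw [add_neg_cancel_right]; exact hψ.ae_not_collision)
      filter_upwards [h3, ae_restrict_mem measurableSet_Ioi] with t h4 h5
      have h6 := hγ2 (t - h) (by have : 1 + h < t := h5
                                 linarith)
      rw [sub_add_cancel] at h6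
      rw [h6]; exact h4
  · rw [hS.integral_eq hN hm hbm hi]
    congr 1
    refine intervalIntegral.integral_congr_ae (ae_of_all _ fun t ht => ?_)
    rw [uIoc_of_le h1h] at ht
    exact hlag t ht

end DynamicProgramming

section Superdifferential

variable {m : Fin N → ℝ} {bm x y z p : Conf d N} {φ φ' ψ ψ' c c' : ℝ → Conf d N} {h : ℝ}

theorem isArc_smul (hz : inOmega m z) {f f' : ℝ → ℝ} (hh : 0 ≤ h)
    (hf : IsPrim f f' 1 (1 + h)) (hnn : ∀ t ∈ Icc 1 (1 + h), 0 ≤ f t)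
    (hpos : ∀ t ∈ Ioo 1 (1 + h), 0 < f t)
    (h2 : IntervalIntegrable (fun t => f' t ^ 2) volume 1 (1 + h))
    (hinv : IntervalIntegrable (fun t => (f t)⁻¹) volume 1 (1 + h)) :
    IsArc m (f 1 • z) (f (1 + h) • z) (fun t => f t • z) (fun t => f' t • z) h where
  nonneg := hh
  prim := hf.clm ((ContinuousLinearMap.id ℝ ℝ).smulRight z)
  start := rfl
  finish := rfl
  mem t _ := inX_smul _ hz.1
  kinetic := (h2.mul_const (minner m z z)).congr fun t _ => by
    simp only [minner_smul_left, minner_smul_right]; ring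
  potential := (hinv.mul_const (U m z)).congr fun t ht => by
    rw [uIoc_of_le (by linarith)] at ht
    exact (U_smul (hnn t ⟨ht.1.le, ht.2⟩) z).symm
  ae_not_collision := by
    rw [← restrict_Ioo_eq_restrict_Ioc]
    filter_upwards [ae_restrict_mem measurableSet_Ioo] with t ht
    exact not_collision_smul (hpos t ht).ne' hz.2

theorem isArc_from_zero (hz : inOmega m z) :
    IsArc m 0 z (fun t => (t - 1) ^ ((2 : ℝ) / 3) • z)
      (fun t => (2 / 3 * (t - 1) ^ (-((1 : ℝ) / 3))) • z) 1 := by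
  have hint : ∀ r : ℝ, -1 < r → IntervalIntegrable (fun t : ℝ => (t - 1) ^ r) volume 1 (1 + 1) :=
    fun r hr => by
      have := (intervalIntegral.intervalIntegrable_rpow' (a := 0) (b := 1) hr).comp_sub_right 1
      simpa using this
  have := isArc_smul (h := 1) (f := fun t : ℝ => (t - 1) ^ ((2 : ℝ) / 3))
    (f' := fun t => 2 / 3 * (t - 1) ^ (-((1 : ℝ) / 3))) hz zero_le_one
    (IsPrim.of_hasDerivAt_Ioo (by norm_num) ?_ (fun t ht => ?_)
      ((hint _ (by norm_num)).const_mul _))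
    (fun t ht => Real.rpow_nonneg (by linarith [ht.1]) _)
    (fun t ht => Real.rpow_pos_of_pos (by linarith [ht.1]) _)
    (((hint (-((2 : ℝ) / 3)) (by norm_num)).const_mul (4 / 9)).congr fun t ht => ?_)
    ((hint (-((2 : ℝ) / 3)) (by norm_num)).congr fun t ht => ?_)
  · have e1 : ((1 : ℝ) - 1) ^ ((2 : ℝ) / 3) • z = 0 := by
      rw [sub_self, Real.zero_rpow (by norm_num), zero_smul]
    have e2 : ((1 : ℝ) + 1 - 1) ^ ((2 : ℝ) / 3) • z = z := by
      rw [add_sub_cancel_right, Real.one_rpow, one_smul]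
    beta_reduce at this
    rwa [e1, e2] at this
  · exact ((continuous_id.sub continuous_const).continuousOn).rpow_const fun _ _ => Or.inr (by norm_num)
  · have ht0 : t - 1 ≠ 0 := by linarith [ht.1]
    refine (((hasDerivAt_id t).sub_const 1).rpow_const (p := (2 : ℝ) / 3)
      (Or.inl ht0)).congr_deriv ?_
    simp only [id, one_mul]
    norm_num
  · rw [uIoc_of_le (by norm_num)] at ht
    have ht0 : 0 < t - 1 := by linarith [ht.1]
    rw [mul_pow, ← Real.rpow_natCast ((t - 1) ^ (-((1 : ℝ) / 3))), ← Real.rpow_mul ht0.le]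
    norm_num
  · rw [uIoc_of_le (by norm_num)] at ht
    exact Real.rpow_neg (by linarith [ht.1]) _

theorem isArc_to_zero (hz : inOmega m z) :
    IsArc m z 0 (fun t => (2 - t) ^ ((2 : ℝ) / 3) • z)
      (fun t => (-(2 / 3) * (2 - t) ^ (-((1 : ℝ) / 3))) • z) 1 := by
  have hint : ∀ r : ℝ, -1 < r → IntervalIntegrable (fun t : ℝ => (2 - t) ^ r) volume 1 (1 + 1) :=
    fun r hr => by
      have := ((intervalIntegral.intervalIntegrable_rpow' (a := 0) (b := 1) hr).comp_sub_left 2).symm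
      norm_num at this ⊢
      exact this
  have := isArc_smul (h := 1) (f := fun t : ℝ => (2 - t) ^ ((2 : ℝ) / 3))
    (f' := fun t => -(2 / 3) * (2 - t) ^ (-((1 : ℝ) / 3))) hz zero_le_one
    (IsPrim.of_hasDerivAt_Ioo (by norm_num) ?_ (fun t ht => ?_)
      ((hint _ (by norm_num)).const_mul _))
    (fun t ht => Real.rpow_nonneg (by linarith [ht.2]) _)
    (fun t ht => Real.rpow_pos_of_pos (by linarith [ht.2]) _)
    (((hint (-((2 : ℝ) / 3)) (by norm_num)).const_mul (4 / 9)).congr fun t ht => ?_)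
    ((hint (-((2 : ℝ) / 3)) (by norm_num)).congr fun t ht => ?_)
  · have e1 : ((2 : ℝ) - 1) ^ ((2 : ℝ) / 3) • z = z := by norm_num
    have e2 : ((2 : ℝ) - (1 + 1)) ^ ((2 : ℝ) / 3) • z = 0 := by
      rw [one_add_one_eq_two, sub_self, Real.zero_rpow (by norm_num), zero_smul]
    beta_reduce at this
    rwa [e1, e2] at this
  · exact ((continuous_const.sub continuous_id).continuousOn).rpow_const fun _ _ => Or.inr (by norm_num)
  · have ht0 : 2 - t ≠ 0 := by linarith [ht.2]
    refine (((hasDerivAt_id t).const_sub 2).rpow_const (p := (2 : ℝ) / 3)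
      (Or.inl ht0)).congr_deriv ?_
    simp only [id]
    norm_num
  · rw [uIoc_of_le (by norm_num)] at ht
    have ht0 : 0 ≤ 2 - t := by linarith [ht.2]
    rw [mul_pow, ← Real.rpow_natCast ((2 - t) ^ (-((1 : ℝ) / 3))), ← Real.rpow_mul ht0]
    norm_num
  · rw [uIoc_of_le (by norm_num)] at ht
    exact Real.rpow_neg (by linarith [ht.2]) _

theorem admissible_zero (hN : 2 ≤ N) (hm : ∀ i, 0 < m i) (hbm : IsMinCentral m bm) :
    Admissible m bm (beta m bm • bm) (fun _ => 0) (fun _ => 0) := by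
  have hb := beta_pos hN hm hbm
  have hcurve : ∀ t, parCurve m bm (beta m bm • bm) (fun _ => 0) t = parR0 m bm t := fun t => by
    simp [parCurve]
  have h00 : minner m (0 : Conf d N) 0 = 0 := by simp [minner]
  refine ⟨(inD_top_iff hm).2 ⟨rfl, fun _ _ => inX_zero, fun t _ => IsPrim.const 0, ?_⟩, ?_, ?_⟩
  · simp [h00]
  · refine integrableOn_zero.congr_fun (fun t _ => ?_) measurableSet_Ioi
    simp [parIntegrand, hcurve, mnorm, minner]
  · filter_upwards [ae_restrict_mem measurableSet_Ioi] with t ht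
    have ht0 : (0 : ℝ) < t := lt_trans one_pos ht
    rw [hcurve]
    exact not_collision_smul (by positivity) hbm.2.1

/-- Every collision-free configuration is the origin of a motion of finite renormalized action. -/
theorem exists_admissible (hN : 2 ≤ N) (hm : ∀ i, 0 < m i) (hbm : IsMinCentral m bm)
    (hx : inOmega m x) : ∃ φ φ', Admissible m bm x φ φ' := by
  have hb := beta_pos hN hm hbm
  have hz : inOmega m (beta m bm • bm) :=
    ⟨inX_smul _ hbm.1, not_collision_smul hb.ne' hbm.2.1⟩
  obtain ⟨φ, φ', h1, -⟩ :=
    (isArc_from_zero hz).exists_admissible hN hm hbm (admissible_zero hN hm hbm)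
  obtain ⟨ψ, ψ', h2, -⟩ := (isArc_to_zero hx).exists_admissible hN hm hbm h1
  exact ⟨ψ, ψ', h2⟩

theorem IsArc.parValue_le (hN : 2 ≤ N) (hm : ∀ i, 0 < m i) (hbm : IsMinCentral m bm)
    (hc : IsArc m x y c c' h) (hψ : Admissible m bm y ψ ψ') :
    parValue m bm x ≤ (∫ t in (1 : ℝ)..(1 + h), lagrangian m c c' t) + parValue m bm y := by
  refine le_of_forall_pos_le_add fun ε hε => ?_
  obtain ⟨χ, χ', hχ, hlt⟩ := hψ.exists_lt hN hm hbm hc.inX_finish hε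
  obtain ⟨φ, φ', hφ, he⟩ := hc.exists_admissible hN hm hbm hχ
  have := hφ.parValue_le hN hm hbm hc.inX_start
  linarith

theorem isArc_segment (hx : inX m x) (hz : inX m z) (hh : 0 ≤ h)
    (hnc : ∀ s ∈ Icc 0 h, ¬ collision (x + s • z)) :
    IsArc m x (x + h • z) (fun t => x + (t - 1) • z) (fun _ => z) h := by
  have h1h : 1 ≤ 1 + h := by linarith
  refine ⟨hh, ?_, by simp, by simp, fun t _ => inX_add hx (inX_smul _ hz),
    intervalIntegrable_const, ?_, ?_⟩
  · refine IsPrim.of_hasDerivAt h1h (fun t _ => ?_) continuousOn_const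
    have := (((hasDerivAt_id t).sub_const 1).smul_const z).const_add x
    simpa using this
  · refine ContinuousOn.intervalIntegrable fun t ht => ?_
    rw [uIcc_of_le h1h] at ht
    have h1 := continuousAt_U (m := m) (hnc (t - 1) ⟨by linarith [ht.1], by linarith [ht.2]⟩)
    exact (ContinuousAt.comp (f := fun t : ℝ => x + (t - 1) • z) h1
      (by fun_prop)).continuousWithinAt
  · filter_upwards [ae_restrict_mem measurableSet_Ioc] with t ht
    exact hnc _ ⟨by linarith [ht.1], by linarith [ht.2]⟩

theorem mnorm_smul (r : ℝ) (z : Conf d N) :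
    mnorm m (r • z) = |r| * mnorm m z := by
  rw [mnorm, minner_smul_left, minner_smul_right, ← mul_assoc, ← sq, Real.sqrt_mul (sq_nonneg r),
    Real.sqrt_sq_eq_abs, mnorm]

theorem superdiff_le (hN : 2 ≤ N) (hm : ∀ i, 0 < m i) (hbm : IsMinCentral m bm)
    (hx : inOmega m x) (hp : inX m p) (hsup : InSuperdiff m (parValue m bm) x p) :
    mnorm m p ^ 2 / 2 - U m x ≤ 0 := by
  rcases eq_or_ne p 0 with rfl | hp0
  · simpa [mnorm, minner] using U_nonneg hm x
  have key : ∀ ε > 0, mnorm m p ^ 2 / 2 - U m x ≤ ε * (1 + mnorm m p) := by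
    intro ε hε
    have hcont : Continuous fun s : ℝ => x + s • (-p) := by fun_prop
    have h0 : Tendsto (fun s : ℝ => x + s • (-p)) (𝓝 0) (𝓝 x) := by
      simpa using hcont.tendsto 0
    have hgood : ∀ᶠ s : ℝ in 𝓝 0,
        ¬ collision (x + s • (-p)) ∧ U m (x + s • (-p)) < U m x + ε :=
      h0.eventually (Filter.Eventually.and (isOpen_not_collision.mem_nhds hx.2)
        ((continuousAt_U hx.2).eventually (gt_mem_nhds (by linarith))))
    obtain ⟨δ, hδ, hball⟩ := Metric.eventually_nhds_iff.1 hgood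
    have hw : Tendsto (fun s : ℝ => x + s • (-p)) (𝓝[>] 0) (𝓝[setX m \ {x}] x) := by
      refine tendsto_nhdsWithin_iff.2 ⟨h0.mono_left nhdsWithin_le_nhds, ?_⟩
      filter_upwards [self_mem_nhdsWithin] with s hs
      refine ⟨inX_add hx.1 (inX_smul _ (by simpa using inX_smul (-1) hp)), ?_⟩
      simp [hp0, (ne_of_gt hs : s ≠ 0)]
    obtain ⟨h, hv, hh⟩ := ((hw.eventually (hsup ε hε)).and
      (Ioo_mem_nhdsGT hδ)).exists
    have hnc : ∀ s ∈ Icc 0 h, ¬ collision (x + s • (-p)) ∧ U m (x + s • (-p)) < U m x + ε :=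
      fun s hs => hball (by
        rw [Real.dist_eq, sub_zero, abs_of_nonneg hs.1]; exact hs.2.trans_lt hh.2)
    have hnp : inX m (-p) := by simpa using inX_smul (-1) hp
    have harc := isArc_segment hx.1 hnp hh.1.le fun s hs => (hnc s hs).1
    obtain ⟨ψ, ψ', hψ⟩ := exists_admissible hN hm hbm
      (⟨harc.inX_finish, (hnc h ⟨hh.1.le, le_rfl⟩).1⟩ : inOmega m _)
    have hle := harc.parValue_le hN hm hbm hψ
    have hq : minner m (-p) (-p) = mnorm m p ^ 2 := by
      rw [mnorm_sq hm, minner_neg_left, minner_neg_right, neg_neg]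
    have hlag : ∫ t in (1 : ℝ)..(1 + h), lagrangian m (fun t => x + (t - 1) • (-p)) (fun _ => -p) t
        ≤ ∫ t in (1 : ℝ)..(1 + h), (mnorm m p ^ 2 / 2 + (U m x + ε)) := by
      refine intervalIntegral.integral_mono_on (by linarith [hh.1])
        ((harc.kinetic.div_const 2).add harc.potential) intervalIntegrable_const fun t ht => ?_
      have := (hnc (t - 1) ⟨by linarith [ht.1], by linarith [ht.2]⟩).2
      simp only [lagrangian]
      rw [hq]
      linarith
    rw [intervalIntegral.integral_const, smul_eq_mul, add_sub_cancel_left] at hlag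
    rw [add_sub_cancel_left, mnorm_smul, minner_smul_right, minner_neg_right, ← mnorm_sq hm,
      abs_of_pos hh.1, show mnorm m (-p) = mnorm m p by rw [mnorm, hq, Real.sqrt_sq (mnorm_nonneg _)]]
      at hv
    have hfin : h * (mnorm m p ^ 2 / 2 - U m x) ≤ h * (ε * (1 + mnorm m p)) := by linarith
    exact le_of_mul_le_mul_left hfin hh.1
  refine le_of_forall_pos_le_add fun δ hδ => ?_
  have hpos : 0 < 1 + mnorm m p := by linarith [mnorm_nonneg (m := m) p]
  have := key (δ / (1 + mnorm m p)) (by positivity)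
  rw [div_mul_cancel₀ _ hpos.ne'] at this
  linarith

end Superdifferential

section Subdifferential

variable {m : Fin N → ℝ} {bm x p : Conf d N} {φ φ' : ℝ → Conf d N}

theorem Admissible.intervalIntegrable_kinetic (hm : ∀ i, 0 < m i) (hbm : IsMinCentral m bm)
    (hφ : Admissible m bm x φ φ') {T : ℝ} (hT : 1 ≤ T) :
    IntervalIntegrable (fun t => minner m (parVel m bm φ' t) (parVel m bm φ' t)) volume 1 T := by
  obtain ⟨-, -, hp, h2⟩ := (inD_top_iff hm).1 hφ.inD
  rw [intervalIntegrable_iff_integrableOn_Ioc_of_le hT]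
  exact integrableOn_minner_add_smul hm hbm
    ((intervalIntegrable_iff_integrableOn_Ioc_of_le hT).1 (hp T hT).1).aestronglyMeasurable
    (h2.mono_set Ioc_subset_Ioi_self) measurable_speed.aestronglyMeasurable
    ((intervalIntegrable_iff_integrableOn_Ioc_of_le hT).1 (intervalIntegrable_speed_sq one_pos hT))

/-- Displacement along an admissible motion is controlled by the kinetic energy. -/
theorem Admissible.minner_parCurve_sub_le (hm : ∀ i, 0 < m i) (hbm : IsMinCentral m bm)
    (hφ : Admissible m bm x φ φ') {s T : ℝ} (hs : 1 < s) (hsT : s ≤ T) :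
    minner m (parCurve m bm x φ s - x) (parCurve m bm x φ s - x) ≤
      (s - 1) * ∫ t in (1 : ℝ)..T, minner m (parVel m bm φ' t) (parVel m bm φ' t) := by
  obtain ⟨h0, -, hp, -⟩ := (inD_top_iff hm).1 hφ.inD
  have h1 := minner_sub_self_le hm hs (isPrim_parCurve (m := m) (bm := bm) (x := x) hs.le
    (hp s hs.le)) (hφ.intervalIntegrable_kinetic hm hbm hs.le)
  rw [parCurve_one h0] at h1
  refine h1.trans (mul_le_mul_of_nonneg_left ?_ (by linarith))
  exact intervalIntegral.integral_mono_interval le_rfl hs.le hsT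
    (ae_of_all _ fun t => minner_self_nonneg hm _)
    (hφ.intervalIntegrable_kinetic hm hbm (hs.le.trans hsT))

theorem minner_add_self_le (hm : ∀ i, 0 < m i) (y z : Conf d N) :
    minner m (y + z) (y + z) ≤ 2 * minner m y y + 2 * minner m z z := by
  have h1 := minner_self_nonneg hm (y - z)
  simp only [minner_add_left, minner_add_right, minner_sub_left, minner_sub_right] at h1 ⊢
  linarith

theorem le_of_quadratic {ε h u E P n D q : ℝ} (hε : 0 < ε) (hε2 : ε < 1 / 2) (hh : 0 < h)
    (hq : 0 ≤ q) (hD : D ≤ h * E) (hsq : n ^ 2 = D)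
    (hquad : 0 ≤ (1 - ε) ^ 2 * D + 2 * (1 - ε) * h * P + h ^ 2 * q)
    (hmain : h * u ≤ 2 * ε * h - E / 2 - P + ε * n) : u ≤ q / 2 + ε * (5 / 2 + q) := by
  have hnD : 2 * h * n ≤ D + h ^ 2 := by linarith [sq_nonneg (n - h)]
  have h1 : 2 * h ^ 2 * u ≤ 5 * ε * h ^ 2 - (1 - ε) * D - 2 * h * P := by
    linarith [mul_le_mul_of_nonneg_left hmain (show 0 ≤ 2 * h by linarith),
      mul_le_mul_of_nonneg_left hnD hε.le]
  have h2 : (1 - ε) * (2 * h ^ 2 * u) ≤ (1 - ε) * (5 * ε * h ^ 2) + h ^ 2 * q := by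
    linarith [mul_le_mul_of_nonneg_left h1 (show 0 ≤ 1 - ε by linarith)]
  have h3 : (1 - ε) * (2 * u) ≤ (1 - ε) * (5 * ε) + q :=
    le_of_mul_le_mul_left (by linarith) (show 0 < h ^ 2 by positivity)
  have h4 : q ≤ (1 - ε) * ((1 + 2 * ε) * q) := by
    linarith [mul_nonneg (mul_nonneg hε.le (show 0 ≤ 1 - 2 * ε by linarith)) hq]
  have h5 : 2 * u ≤ 5 * ε + (1 + 2 * ε) * q :=
    le_of_mul_le_mul_left (by linarith) (show 0 < 1 - ε by linarith)
  linarith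

theorem le_subdiff (hN : 2 ≤ N) (hm : ∀ i, 0 < m i) (hbm : IsMinCentral m bm)
    (hx : inOmega m x) (hsub : InSubdiff m (parValue m bm) x p) :
    0 ≤ mnorm m p ^ 2 / 2 - U m x := by
  have hb := beta_pos hN hm hbm
  have key : ∀ ε > 0, ε < 1 / 2 → U m x ≤ mnorm m p ^ 2 / 2 + ε * (5 / 2 + mnorm m p ^ 2) := by
    intro ε hε hε2
    obtain ⟨c, hc, hnorm⟩ := norm_sq_le_minner (d := d) hm
    have hev : ∀ᶠ y in 𝓝 x, (y ∈ setX m \ {x} →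
        -(ε * mnorm m (y - x)) ≤ parValue m bm y - parValue m bm x - minner m p (y - x)) ∧
        U m x - ε < U m y :=
      (eventually_nhdsWithin_iff.1 (hsub ε hε)).and
        ((continuousAt_U hx.2).eventually (lt_mem_nhds (by linarith)))
    obtain ⟨r, hr, hball⟩ := Metric.eventually_nhds_iff.1 hev
    have hnear : ∀ y, minner m (y - x) (y - x) < r ^ 2 / c → dist y x < r := fun y hy => by
      rw [dist_eq_norm]
      refine lt_of_pow_lt_pow_left₀ 2 hr.le ((hnorm _).trans_lt ?_)
      rwa [lt_div_iff₀ hc, mul_comm] at hy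
    set K := minner m (x - beta m bm • bm) (x - beta m bm • bm) with hK
    have hK0 : 0 ≤ K := minner_self_nonneg hm _
    set M := 2 * (|parValue m bm x| + 1 + (1 + beta m bm) * (1 + 2 * K)) with hM
    have hM0 : 0 < M := by positivity
    have hρ : 0 < r ^ 2 / c := by positivity
    obtain ⟨h, hh0, hh1, hhb, hhM⟩ : ∃ h : ℝ, 0 < h ∧ h ≤ 1 ∧ 8 * h * (1 + beta m bm) ≤ 1 ∧
        2 * h * M < r ^ 2 / c := by
      refine ⟨min 1 (min (1 / (8 * (1 + beta m bm))) (r ^ 2 / c / (4 * M))), by positivity,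
        min_le_left _ _, ?_, ?_⟩
      · have h1 := (min_le_right 1 _).trans
          (min_le_left (1 / (8 * (1 + beta m bm))) (r ^ 2 / c / (4 * M)))
        rw [le_div_iff₀ (by positivity)] at h1
        linarith
      · have h1 := (min_le_right 1 _).trans
          (min_le_right (1 / (8 * (1 + beta m bm))) (r ^ 2 / c / (4 * M)))
        rw [le_div_iff₀ (by positivity)] at h1
        linarith
    have h1h : 1 ≤ 1 + h := by linarith
    obtain ⟨φ₀, φ₀', hφ₀⟩ := exists_admissible hN hm hbm hx
    obtain ⟨φ, φ', hφ, hlt⟩ := hφ₀.exists_lt hN hm hbm hx.1 (show 0 < ε * h by positivity)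
    obtain ⟨ψ, ψ', hψ, he⟩ := hφ.exists_tail hN hm hbm hx.1 hh0.le
    set γ := parCurve m bm x φ with hγ
    set y := γ (1 + h) with hy
    have hyX : inX m y :=
      inX_parCurve hbm.1 hx.1 (((inD_top_iff hm).1 hφ.inD).2.1 _ h1h)
    have hvy := hψ.parValue_le hN hm hbm hyX
    have hvy' := hψ.le_parValue hN hm hbm hyX
    have hkin := hφ.intervalIntegrable_kinetic hm hbm h1h
    have hlag : IntervalIntegrable (lagrangian m γ (parVel m bm φ')) volume 1 (1 + h) :=
      (intervalIntegrable_parIntegrand_iff hN hm hbm hφ.inD h1h).1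
        ((intervalIntegrable_iff_integrableOn_Ioc_of_le h1h).2
          (hφ.integrableOn.mono_set Ioc_subset_Ioi_self))
    have hpot : IntervalIntegrable (fun t => U m (γ t)) volume 1 (1 + h) :=
      (hlag.sub (hkin.div_const 2)).congr fun t _ => by simp [lagrangian]
    set E := ∫ t in (1 : ℝ)..(1 + h), minner m (parVel m bm φ' t) (parVel m bm φ' t) with hE
    have hsplit : ∫ t in (1 : ℝ)..(1 + h), lagrangian m γ (parVel m bm φ') t =
        E / 2 + ∫ t in (1 : ℝ)..(1 + h), U m (γ t) := by
      rw [hE, ← intervalIntegral.integral_div, ← intervalIntegral.integral_add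
        (hkin.div_const 2) hpot]
      rfl
    have hdisp : ∀ s ∈ Ioc 1 (1 + h), minner m (γ s - x) (γ s - x) ≤ (s - 1) * E := fun s hs =>
      hφ.minner_parCurve_sub_le hm hbm hs.1 hs.2
    have hE0 : 0 ≤ E := intervalIntegral.integral_nonneg h1h fun t _ => minner_self_nonneg hm _
    have hD : minner m (y - x) (y - x) ≤ h * E := by
      simpa using hdisp (1 + h) ⟨by linarith, le_rfl⟩
    have hU0 : 0 ≤ ∫ t in (1 : ℝ)..(1 + h), U m (γ t) :=
      intervalIntegral.integral_nonneg h1h fun t _ => U_nonneg hm _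
    have hEM : E ≤ 2 * M := by
      have h1 : minner m (y - beta m bm • bm) (y - beta m bm • bm) ≤ 2 * (h * E) + 2 * K := by
        have := minner_add_self_le hm (y - x) (x - beta m bm • bm)
        rw [sub_add_sub_cancel] at this
        linarith
      have h2 : (1 + beta m bm) * (1 + minner m (y - beta m bm • bm) (y - beta m bm • bm)) ≤
          (1 + beta m bm) * (1 + (2 * (h * E) + 2 * K)) :=
        mul_le_mul_of_nonneg_left (by linarith) (by linarith)
      have h3 : 8 * h * (1 + beta m bm) * E ≤ 1 * E := mul_le_mul_of_nonneg_right hhb hE0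
      have h4 : ε * h ≤ 1 := mul_le_one₀ (by linarith) hh0.le hh1
      have h5 := le_abs_self (parValue m bm x)
      rw [hM]
      linarith
    have hclose : ∀ s ∈ Ioc 1 (1 + h), dist (γ s) x < r := fun s hs => by
      refine hnear _ ((hdisp s hs).trans_lt (lt_of_le_of_lt ?_ hhM))
      have h1 : (s - 1) * E ≤ h * E := mul_le_mul_of_nonneg_right (by linarith [hs.2]) hE0
      have h2 : h * E ≤ h * (2 * M) := mul_le_mul_of_nonneg_left hEM hh0.le
      linarith
    have hU : h * (U m x - ε) ≤ ∫ t in (1 : ℝ)..(1 + h), U m (γ t) := by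
      have h1 : ∫ _ in (1 : ℝ)..(1 + h), (U m x - ε) ≤ ∫ t in (1 : ℝ)..(1 + h), U m (γ t) := by
        refine intervalIntegral.integral_mono_ae_restrict h1h intervalIntegrable_const hpot ?_
        rw [← restrict_Ioc_eq_restrict_Icc]
        filter_upwards [ae_restrict_mem measurableSet_Ioc] with t ht
        exact (hball (hclose t ht)).2.le
      rwa [intervalIntegral.integral_const, smul_eq_mul, add_sub_cancel_left] at h1
    have hsubd : -(ε * mnorm m (y - x)) ≤
        parValue m bm y - parValue m bm x - minner m p (y - x) := by
      by_cases hyx : y = x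
      · rw [hyx]; simp [mnorm, minner]
      · exact (hball (hclose (1 + h) ⟨by linarith, le_rfl⟩)).1 ⟨hyX, hyx⟩
    have hsq := mnorm_sq hm (y - x)
    have hpq := mnorm_sq hm p
    set D := minner m (y - x) (y - x) with hDdef
    set P := minner m p (y - x) with hP
    set n := mnorm m (y - x) with hn
    set q := mnorm m p ^ 2 with hq
    have hq0 : 0 ≤ q := sq_nonneg _
    have hquad : 0 ≤ (1 - ε) ^ 2 * D + 2 * (1 - ε) * h * P + h ^ 2 * q := by
      have := minner_self_nonneg hm ((1 - ε) • (y - x) + h • p)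
      simp only [minner_add_left, minner_add_right, minner_smul_left, minner_smul_right,
        minner_comm (y - x) p] at this
      rw [← hDdef, ← hP, ← hpq] at this
      linarith
    have hmain : h * U m x ≤ 2 * ε * h - E / 2 - P + ε * n := by linarith
    exact le_of_quadratic hε hε2 hh0 hq0 hD hsq hquad hmain
  have hlim : U m x ≤ mnorm m p ^ 2 / 2 := by
    refine le_of_forall_pos_le_add fun δ hδ => ?_
    have hpos : 0 < 5 / 2 + mnorm m p ^ 2 := by positivity
    have h1 := key (min (1 / 4) (δ / (5 / 2 + mnorm m p ^ 2))) (by positivity)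
      ((min_le_left _ _).trans_lt (by norm_num))
    have h2 := mul_le_mul_of_nonneg_right
      (min_le_right (1 / 4) (δ / (5 / 2 + mnorm m p ^ 2))) hpos.le
    rw [div_mul_cancel₀ _ hpos.ne'] at h2
    linarith
  linarith

end Subdifferential

/-- **Hamilton–Jacobi theorem, parabolic case** : the renormalized value function
`v(x) = min_φ A_x(φ)` is a viscosity solution on `Ω` of `½‖∇v‖_M² − U = 0` : for every
`x ∈ Ω`, `½‖p‖_M² − U(x) ≤ 0` for all `p ∈ D⁺v(x)` and `½‖p‖_M² − U(x) ≥ 0` for all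
`p ∈ D⁻v(x)`. -/
theorem value_function_viscosity_parabolic {d N : ℕ} (hd : 2 ≤ d) (hN : 2 ≤ N)
    (m : Fin N → ℝ) (hm : ∀ i, 0 < m i)
    (bm : Conf d N) (hbm : IsMinCentral m bm)
    (x : Conf d N) (hx : inOmega m x) :
    (∀ p : Conf d N, inX m p → InSuperdiff m (parValue m bm) x p →
      (mnorm m p) ^ 2 / 2 - U m x ≤ 0) ∧
    (∀ p : Conf d N, inX m p → InSubdiff m (parValue m bm) x p →
      0 ≤ (mnorm m p) ^ 2 / 2 - U m x) := by
  exact ⟨fun p hp h => superdiff_le hN hm hbm hx hp h, fun p _ h => le_subdiff hN hm hbm hx h⟩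

end NBodyHJ
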